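/- arXiv:math/0205134 — 2 statements merged into one kernel-verified Lean document; each statement's English description precedes it below -/
import Mathlib

section
/- Let P and Q be complex polynomials and let a, b be distinct complex numbers with P(a) = P(b). Let d_a (resp. d_b) be the multiplicity of the point a (resp. b) with respect to P, i.e. the multiplicity of a (resp. b) as a root of P − P(a). Suppose that for every integer i ≥ 0 and every integer j with 0 ≤ j ≤ d_a + d_b − 2 the moment ∫_a^b P(z)^i Q(z)^j Q'(z) dz vanishes, i.e. every polynomial S with S' = P^i·Q^j·Q' satisfies S(a) = S(b). Then there exist complex polynomials P̃, Q̃, W such that P = P̃ ∘ W, Q = Q̃ ∘ W, and W(a) = W(b). -/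
open Polynomial

/-!
Subtract a constant from `P` so that `P(a) = P(b) = 0`. For a suitable `N`, the equation
`P(z) = X ^ N` is solved by power series `z₁, …, zₙ`, `n = deg P`, of which exactly `d_a + d_b`
start at `a` or `b`. Integrating by parts, the hypothesis makes `g = Q ^ k` orthogonal to all
`G(P) P'` on `[a, b]`, for `k < d_a + d_b`.

The polynomials `g` with this property, evaluated at the branches `zᵢ`, form a space of vectors
stable under the derivation `D` of Laurent series, and such a space is spanned by constant vectors.
For a vector `cᵢ` of constants, orthogonality makes `∑ cᵢ · D(log ((zᵢ - b) / (zᵢ - a)))` the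
derivative of a Laurent series (as for `∫ₐᵇ g P' / (P - t)`, whose logarithmic part is
`∑ g(zᵢ) log ((zᵢ - b) / (zᵢ - a))`), so its residue vanishes: `∑ cᵢ rᵢ = 0`, where `rᵢ` is negative
if `zᵢ` starts at `a`, positive if it starts at `b`, and zero otherwise. Hence `∑ g(zᵢ) rᵢ = 0`.

For `g = Q ^ k` these are `d_a + d_b` power-sum relations with at most `d_a + d_b` nonzero weights,
so by Vandermonde the weights sum to zero over each value of `Q(zᵢ)`. Therefore some branch at `a`
and some branch at `b` give the same values to both `P` and `Q`, and, by Lüroth's theorem, the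
field of rational functions that agree on these two branches is generated by a polynomial `W`.
-/

section FormalIntegral

variable {F : Type*} [Field F]

/-- The formal integral `∫ₐᵇ f` of a polynomial, as a linear functional of `f`. -/
noncomputable def formalIntegral (a b : F) : F[X] →ₗ[F] F :=
  Polynomial.lsum fun n ↦ ((b ^ (n + 1) - a ^ (n + 1)) / ((n : F) + 1)) • LinearMap.id

variable (a b : F)

lemma formalIntegral_monomial (n : ℕ) (c : F) :
    formalIntegral a b (monomial n c) = (b ^ (n + 1) - a ^ (n + 1)) / ((n : F) + 1) * c := by
  simp [formalIntegral, Polynomial.lsum_apply]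

lemma formalIntegral_map {K : Type*} [Field K] (φ : F →+* K) (f : F[X]) :
    formalIntegral (φ a) (φ b) (f.map φ) = φ (formalIntegral a b f) := by
  induction f using Polynomial.induction_on' with
  | add p q hp hq => simp only [Polynomial.map_add, map_add, hp, hq]
  | monomial n c => simp [formalIntegral_monomial]

variable [CharZero F]

lemma formalIntegral_derivative (f : F[X]) :
    formalIntegral a b (derivative f) = f.eval b - f.eval a := by
  induction f using Polynomial.induction_on' with
  | add p q hp hq => simp only [eval_add, map_add, hp, hq]; ring
  | monomial n c =>
    obtain _ | n := n
    · simp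
    · have : (n : F) + 1 ≠ 0 := n.cast_add_one_ne_zero
      simp only [derivative_monomial, formalIntegral_monomial, Nat.add_sub_cancel, eval_monomial,
        Nat.cast_add, Nat.cast_one]
      field_simp

lemma exists_derivative_eq (f : F[X]) : ∃ g : F[X], derivative g = f := by
  induction f using Polynomial.induction_on' with
  | add p q hp hq =>
    obtain ⟨⟨g, rfl⟩, ⟨h, rfl⟩⟩ := hp, hq
    exact ⟨g + h, derivative_add⟩
  | monomial n c =>
    have : (n : F) + 1 ≠ 0 := n.cast_add_one_ne_zero
    exact ⟨monomial (n + 1) (c / (n + 1)), by simp [this]⟩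

lemma formalIntegral_mul_derivative (f g : F[X]) :
    formalIntegral a b (f * derivative g) =
      f.eval b * g.eval b - f.eval a * g.eval a - formalIntegral a b (derivative f * g) := by
  rw [← eval_mul, ← eval_mul, ← formalIntegral_derivative, derivative_mul, map_add,
    add_sub_cancel_left]

open Differential

omit [CharZero F] in
variable {a b} in
lemma formalIntegral_mapCoeffs [Differential F] (ha : a′ = 0) (hb : b′ = 0) (f : F[X]) :
    formalIntegral a b (mapCoeffs f) = (formalIntegral a b f)′ := by
  induction f using Polynomial.induction_on' with
  | add p q hp hq => simp only [map_add, hp, hq]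
  | monomial n c =>
    have hn : ((n : F) + 1)′ = 0 := by
      exact_mod_cast (Differential.deriv (R := F)).map_natCast (n + 1)
    have hcoeff : ((b ^ (n + 1) - a ^ (n + 1)) / ((n : F) + 1))′ = 0 := by
      simp [Derivation.leibniz_div, Derivation.leibniz_pow, ha, hb, hn]
    simp [formalIntegral_monomial, Derivation.leibniz, hcoeff]

end FormalIntegral

section DivX

variable {F : Type*} [Field F] {z : F}

lemma divByMonic_X_sub_C_unique {f q : F[X]} {c : F} (h : f = (X - C z) * q + C c) :
    f /ₘ (X - C z) = q :=
  (div_modByMonic_unique q (C c) (monic_X_sub_C z)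
    ⟨by rw [h, add_comm], by rw [degree_X_sub_C]; exact degree_C_lt⟩).1

lemma X_sub_C_mul_divByMonic_add_C_eval (f : F[X]) (z : F) :
    (X - C z) * (f /ₘ (X - C z)) + C (f.eval z) = f := by
  rw [← modByMonic_X_sub_C_eq_C_eval, add_comm, modByMonic_add_div]

lemma eval_divByMonic_X_sub_C (f : F[X]) {x : F} (hx : x ≠ z) :
    (f /ₘ (X - C z)).eval x = (f.eval x - f.eval z) / (x - z) := by
  rw [eq_div_iff (sub_ne_zero.mpr hx)]
  conv_rhs => rw [← X_sub_C_mul_divByMonic_add_C_eval f z]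
  simp [mul_comm]

end DivX

section CompOrthogonal

variable {F : Type*} [Field F]

/-- The polynomials `g` such that `∫ₐᵇ G(P) P' g = 0` for every polynomial `G`. -/
def compOrthogonal (P : F[X]) (a b : F) : Submodule F F[X] where
  carrier := {g | ∀ G : F[X], formalIntegral a b (G.comp P * derivative P * g) = 0}
  add_mem' hf hg G := by rw [mul_add, map_add, hf, hg, add_zero]
  zero_mem' G := by simp
  smul_mem' c g hg G := by rw [mul_smul_comm, map_smul, hg, smul_zero]

variable {P g : F[X]} {a b : F}

lemma formalIntegral_comp_mul_eq_zero_of_forall_pow {f : F[X]}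
    (h : ∀ n : ℕ, formalIntegral a b (P ^ n * f) = 0) (G : F[X]) :
    formalIntegral a b (G.comp P * f) = 0 := by
  induction G using Polynomial.induction_on' with
  | add p q hp hq => simp only [add_comp, add_mul, map_add, hp, hq, add_zero]
  | monomial n c => rw [monomial_comp, mul_assoc, ← smul_eq_C_mul, map_smul, h, smul_zero]

lemma sub_C_mem_compOrthogonal (hg : g ∈ compOrthogonal P a b) (c : F) :
    g ∈ compOrthogonal (P - C c) a b := by
  intro G
  have h := hg (G.comp (X - C c))
  rwa [comp_assoc, sub_comp, X_comp, C_comp, ← sub_zero (derivative P), ← derivative_C (a := c),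
    ← derivative_sub] at h

lemma map_mem_compOrthogonal {L : Type*} [Field L] (φ : F →+* L)
    (hg : g ∈ compOrthogonal P a b) :
    g.map φ ∈ compOrthogonal (P.map φ) (φ a) (φ b) := by
  have hpow (n : ℕ) : formalIntegral (φ a) (φ b)
      (P.map φ ^ n * (derivative (P.map φ) * g.map φ)) = 0 := by
    have h := hg (X ^ n)
    rw [X_pow_comp, mul_assoc] at h
    rw [derivative_map, ← Polynomial.map_mul, ← Polynomial.map_pow, ← Polynomial.map_mul,
      formalIntegral_map, h, map_zero]
  intro G
  rw [mul_assoc]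
  exact formalIntegral_comp_mul_eq_zero_of_forall_pow hpow G

lemma mul_derivative_mem_compOrthogonal [CharZero F] {M Δ : F[X]}
    (hΔ : Δ.comp P = derivative P * M) (hMa : M.eval a = 0) (hMb : M.eval b = 0)
    (hg : g ∈ compOrthogonal P a b) :
    M * derivative g ∈ compOrthogonal P a b := by
  intro G
  have hcomp : (G * Δ).comp P = G.comp P * derivative P * M := by rw [mul_comp, hΔ, mul_assoc]
  rw [← mul_assoc, ← hcomp, formalIntegral_mul_derivative, derivative_comp,
    mul_comm (derivative P), hg, hcomp]
  simp [hMa, hMb]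

lemma exists_ne_zero_formalIntegral_comp_eq_zero (P : F[X]) (a b : F) (n : ℕ) :
    ∃ G : F[X], G ≠ 0 ∧
      ∀ j < n, formalIntegral a b (G.comp P * derivative P * X ^ j) = 0 := by
  let momentMap : F[X] →ₗ[F] Fin n → F :=
    { toFun := fun G j ↦ formalIntegral a b (G.comp P * derivative P * X ^ (j : ℕ))
      map_add' := fun _ _ ↦ by ext; simp [add_mul]
      map_smul' := fun _ _ ↦ by ext; simp [smul_comp] }
  have hker : LinearMap.ker momentMap ≠ ⊥ := fun h ↦
    Polynomial.not_finite (Module.Finite.of_injective momentMap (LinearMap.ker_eq_bot.mp h))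
  obtain ⟨G, hG, hG0⟩ := (Submodule.ne_bot_iff _).mp hker
  exact ⟨G, hG0, fun j hj ↦ congrFun hG ⟨j, hj⟩⟩

lemma exists_eval_ne_zero_formalIntegral_comp_eq_zero {L : Type*} [Field L] [Algebra F L]
    (P : F[X]) (a b : F) {t : L} (ht : Transcendental F t) (S : L[X]) :
    ∃ G : L[X], G.eval t ≠ 0 ∧
      formalIntegral (algebraMap F L a) (algebraMap F L b)
        (G.comp (P.map (algebraMap F L)) * derivative (P.map (algebraMap F L)) * S) = 0 := by
  obtain ⟨G, hG0, hG⟩ := exists_ne_zero_formalIntegral_comp_eq_zero P a b (S.natDegree + 1)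
  refine ⟨G.map (algebraMap F L), ?_, ?_⟩
  · rw [eval_map_algebraMap]
    exact fun h ↦ hG0 (transcendental_iff.mp ht G h)
  · conv_lhs => rw [S.as_sum_range_C_mul_X_pow]
    rw [Finset.mul_sum, map_sum]
    refine Finset.sum_eq_zero fun j hj ↦ ?_
    have h := formalIntegral_map a b (algebraMap F L) (G.comp P * derivative P * X ^ j)
    rw [hG j (Finset.mem_range.mp hj), map_zero, Polynomial.map_mul, Polynomial.map_mul,
      Polynomial.map_pow, map_X, Polynomial.map_comp, ← derivative_map] at h
    rw [mul_left_comm, ← smul_eq_C_mul, map_smul, h, smul_zero]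

lemma mem_compOrthogonal_of_forall_pow_derivative [CharZero F] (hPab : P.eval a = P.eval b)
    (h : ∀ n : ℕ, formalIntegral a b (P ^ n * derivative g) = 0) : g ∈ compOrthogonal P a b := by
  intro G
  obtain ⟨H, rfl⟩ := exists_derivative_eq G
  have hgab : g.eval b = g.eval a := by
    simpa [formalIntegral_derivative, sub_eq_zero] using h 0
  have hparts := formalIntegral_mul_derivative a b (H.comp P) g
  rwa [formalIntegral_comp_mul_eq_zero_of_forall_pow h, eval_comp, eval_comp, hPab, hgab, sub_self,
    zero_sub, zero_eq_neg, derivative_comp, mul_comm (derivative P)] at hparts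

end CompOrthogonal

section ImplicitDeriv

open Differential

variable {F : Type*} [Field F] [Differential F] {P M Δ g : F[X]} {a b z : F}

lemma mapCoeffs_comp (hP : mapCoeffs P = 0) (G : F[X]) :
    mapCoeffs (G.comp P) = (mapCoeffs G).comp P := by
  induction G using Polynomial.induction_on' with
  | add p q hp hq => simp only [add_comp, map_add, hp, hq]
  | monomial n c => simp [monomial_comp, Derivation.leibniz, Derivation.leibniz_pow, hP, mul_comm]

lemma mapCoeffs_derivative (f : F[X]) :
    mapCoeffs (derivative f) = derivative (mapCoeffs f) := by
  ext n
  have hn : ((n : F) + 1)′ = 0 := by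
    exact_mod_cast (Differential.deriv (R := F)).map_natCast (n + 1)
  simp [coeff_derivative, Derivation.leibniz, hn, mul_comm]

lemma mapCoeffs_mem_compOrthogonal (ha : a′ = 0) (hb : b′ = 0) (hP : mapCoeffs P = 0)
    (hg : g ∈ compOrthogonal P a b) : mapCoeffs g ∈ compOrthogonal P a b := by
  intro G
  have hleibniz : mapCoeffs (G.comp P * derivative P * g) =
      G.comp P * derivative P * mapCoeffs g + (mapCoeffs G).comp P * derivative P * g := by
    simp only [Derivation.leibniz, mapCoeffs_derivative, mapCoeffs_comp hP, hP, derivative_zero,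
      smul_eq_mul]
    ring
  have h := formalIntegral_mapCoeffs ha hb (G.comp P * derivative P * g)
  rwa [hleibniz, map_add, hg, hg, map_zero, add_zero] at h

lemma implicitDeriv_mem_compOrthogonal [CharZero F] (ha : a′ = 0) (hb : b′ = 0)
    (hP : mapCoeffs P = 0) (hΔ : Δ.comp P = derivative P * M)
    (hMa : M.eval a = 0) (hMb : M.eval b = 0) (hg : g ∈ compOrthogonal P a b) :
    implicitDeriv M g ∈ compOrthogonal P a b :=
  add_mem (mapCoeffs_mem_compOrthogonal ha hb hP hg)
    (mul_derivative_mem_compOrthogonal hΔ hMa hMb hg)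

lemma implicitDeriv_eq_X_sub_C_mul (hz : z′ = M.eval z) (g : F[X]) :
    implicitDeriv M g = (X - C z) *
      (implicitDeriv M (g /ₘ (X - C z)) + M /ₘ (X - C z) * (g /ₘ (X - C z))) + C (g.eval z)′ := by
  have hM := X_sub_C_mul_divByMonic_add_C_eval M z
  conv_lhs => rw [← X_sub_C_mul_divByMonic_add_C_eval g z]
  simp only [map_add, Derivation.leibniz, map_sub, implicitDeriv_X, implicitDeriv_C, smul_eq_mul,
    hz]
  linear_combination -(g /ₘ (X - C z)) * hM

lemma eval_implicitDeriv (hz : z′ = M.eval z) (g : F[X]) :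
    (implicitDeriv M g).eval z = (g.eval z)′ := by
  rw [implicitDeriv_eq_X_sub_C_mul hz]
  simp

lemma implicitDeriv_divByMonic (hz : z′ = M.eval z) (g : F[X]) :
    implicitDeriv M g /ₘ (X - C z) =
      implicitDeriv M (g /ₘ (X - C z)) + M /ₘ (X - C z) * (g /ₘ (X - C z)) :=
  divByMonic_X_sub_C_unique (implicitDeriv_eq_X_sub_C_mul hz g)

lemma formalIntegral_implicitDeriv_divByMonic [CharZero F] (ha : a′ = 0) (hb : b′ = 0)
    (hMa : M.eval a = 0) (hMb : M.eval b = 0) (hz : z′ = M.eval z) (hza : z ≠ a) (hzb : z ≠ b)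
    (g : F[X]) :
    formalIntegral a b (implicitDeriv M g /ₘ (X - C z)) =
      (formalIntegral a b (g /ₘ (X - C z)))′ + g.eval z * (z′ / (z - b) - z′ / (z - a)) -
        formalIntegral a b (derivative (M /ₘ (X - C z)) * g) := by
  set q := g /ₘ (X - C z)
  set K := M /ₘ (X - C z)
  have hg : (X - C z) * q + C (g.eval z) = g := X_sub_C_mul_divByMonic_add_C_eval g z
  have hM : (X - C z) * K + C (M.eval z) = M := X_sub_C_mul_divByMonic_add_C_eval M z
  have hK (x : F) (hx : z ≠ x) (hMx : M.eval x = 0) : K.eval x = z′ / (z - x) := by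
    rw [eval_divByMonic_X_sub_C M hx.symm, hMx, hz, ← neg_sub z x, div_neg, zero_sub, neg_div,
      neg_neg]
  have hM' : derivative M = K + (X - C z) * derivative K := by
    conv_lhs => rw [← hM]
    simp [derivative_mul]
  have hparts : formalIntegral a b (M * derivative q) = -formalIntegral a b (derivative M * q) := by
    rw [formalIntegral_mul_derivative, hMa, hMb]; ring
  have hsplit : K * q - derivative M * q = g.eval z • derivative K - derivative K * g := by
    rw [smul_eq_C_mul, hM']
    linear_combination -derivative K * hg
  have hboundary := congrArg (formalIntegral a b) hsplit
  rw [map_sub, map_sub, map_smul, formalIntegral_derivative, hK a hza hMa, hK b hzb hMb,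
    smul_eq_mul] at hboundary
  rw [implicitDeriv_divByMonic hz, map_add, implicitDeriv, Derivation.add_apply, map_add,
    formalIntegral_mapCoeffs ha hb]
  simp only [Derivation.smul_apply, Derivation.restrictScalars_apply, derivative'_apply,
    smul_eq_mul]
  linear_combination hparts + hboundary

end ImplicitDeriv

section Descent

open Differential

variable {F ι : Type*} [Field F] [Differential F] [Finite ι]

lemma le_span_constants_of_deriv_mem {Y : Submodule F (ι → F)}
    (hY : ∀ y ∈ Y, (fun i ↦ (y i)′) ∈ Y) :
    Y ≤ Submodule.span F {c | c ∈ Y ∧ ∀ i, (c i)′ = 0} := by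
  classical
  have := Fintype.ofFinite ι
  suffices h : ∀ (s : Finset ι), ∀ y ∈ Y, (∀ i ∉ s, y i = 0) →
      y ∈ Submodule.span F {c | c ∈ Y ∧ ∀ i, (c i)′ = 0} from
    fun y hy ↦ h Finset.univ y hy (by simp)
  intro s
  induction s using Finset.strongInduction with | H s ih =>
  intro y hy hys
  by_cases hy0 : y = 0
  · exact hy0 ▸ zero_mem _
  obtain ⟨i, hi⟩ := Function.ne_iff.mp hy0
  have his : i ∈ s := by_contra fun h ↦ hi (hys i h)
  set e := (y i)⁻¹ • y with he
  have heY : e ∈ Y := Y.smul_mem _ hy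
  have hei : e i = 1 := inv_mul_cancel₀ hi
  have hes (j : ι) (hj : j ∉ s) : e j = 0 := by simp [he, hys j hj]
  set e' : ι → F := fun j ↦ (e j)′ with he'
  have he's (j : ι) (hj : j ∉ s) : e' j = 0 := by simp [he', hes j hj]
  have he'i : e' i = 0 := by simp [he', hei]
  have he'_mem := ih (s.erase i) (Finset.erase_ssubset his) e' (hY e heY) fun j hj ↦ by
    obtain rfl | hji := eq_or_ne j i
    · exact he'i
    · exact he's j fun hjs ↦ hj (Finset.mem_erase.mpr ⟨hji, hjs⟩)
  suffices he_mem : e ∈ Submodule.span F {c | c ∈ Y ∧ ∀ i, (c i)′ = 0} by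
    rw [show y = y i • e by rw [he, smul_inv_smul₀ hi]]
    exact Submodule.smul_mem _ _ he_mem
  by_cases he'0 : e' = 0
  · exact Submodule.subset_span ⟨heY, fun j ↦ congrFun he'0 j⟩
  obtain ⟨j, hj⟩ := Function.ne_iff.mp he'0
  have hjs : j ∈ s := by_contra fun h ↦ hj (he's j h)
  have hdiff := ih (s.erase j) (Finset.erase_ssubset hjs) (e - (e j / e' j) • e')
    (Y.sub_mem heY (Y.smul_mem _ (hY e heY))) fun m hm ↦ by
      obtain rfl | hmj := eq_or_ne m j
      · simp [div_mul_cancel₀ _ hj]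
      · have hms : m ∉ s := fun h ↦ hm (Finset.mem_erase.mpr ⟨hmj, h⟩)
        simp [hes m hms, he's m hms]
  simpa using add_mem hdiff (Submodule.smul_mem _ (e j / e' j) he'_mem)

end Descent

section RegularPart

variable {F ι : Type*} [Field F] [Fintype ι] {P M Δ g : F[X]} {a b t l : F} {z : ι → F}

/-- The regular part of the integral of `g P' / (P - t)`: if `P - t = l ∏ᵢ (X - zᵢ)`, then formally
`∫ₐᵇ g P' / (P - t) = regularPart a b z g + ∑ᵢ g(zᵢ) log ((b - zᵢ) / (a - zᵢ))`. -/
noncomputable def regularPart (a b : F) (z : ι → F) (g : F[X]) : F :=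
  ∑ i, formalIntegral a b (g /ₘ (X - C (z i)))

section

variable (hfac : P - C t = C l * Lagrange.nodal Finset.univ z)
include hfac

lemma eval_eq_of_sub_C_eq_nodal (i : ι) : P.eval (z i) = t := by
  have h := congrArg (eval (z i)) hfac
  rwa [eval_mul, Lagrange.eval_nodal_at_node (Finset.mem_univ i), mul_zero, eval_sub, eval_C,
    sub_eq_zero] at h

lemma derivative_eq_sum_of_sub_C_eq_nodal [DecidableEq ι] :
    derivative P = ∑ i, C l * Lagrange.nodal (Finset.univ.erase i) z := by
  simpa [Lagrange.derivative_nodal, Finset.mul_sum] using congrArg derivative hfac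

variable (hl : l ≠ 0)
include hl

lemma sub_C_ne_zero_of_sub_C_eq_nodal : P - C t ≠ 0 :=
  hfac ▸ mul_ne_zero (C_ne_zero.mpr hl) Lagrange.nodal_ne_zero

variable (hz : Function.Injective z)
include hz

lemma sub_C_dvd_of_forall_eval_eq_zero (hg : ∀ i, g.eval (z i) = 0) : P - C t ∣ g := by
  rw [hfac, (isUnit_C.mpr hl.isUnit).mul_left_dvd]
  exact Finset.prod_dvd_of_coprime (fun i _ j _ hij ↦ pairwise_coprime_X_sub_C hz hij)
    fun i _ ↦ dvd_iff_isRoot.mpr (hg i)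

omit hl in
lemma mul_nodal_erase_eq_basis [DecidableEq ι] {s : F} {i : ι}
    (hs : (derivative P).eval (z i) * M.eval (z i) = s) :
    C l * Lagrange.nodal (Finset.univ.erase i) z * C (M.eval (z i)) =
      C s * Lagrange.basis Finset.univ z i := by
  have hP' : (derivative P).eval (z i) * Lagrange.nodalWeight Finset.univ z i = l := by
    have hw := Lagrange.nodalWeight_ne_zero hz.injOn (Finset.mem_univ i)
    rw [Lagrange.nodalWeight_eq_eval_derivative_nodal (Finset.mem_univ i)] at hw ⊢
    have h := congrArg (fun f ↦ (derivative f).eval (z i)) hfac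
    simp only [derivative_sub, derivative_C, sub_zero, derivative_C_mul, eval_mul, eval_C] at h
    rw [h, mul_assoc, mul_inv_cancel₀ (inv_eq_zero.not.mp hw), mul_one]
  rw [Lagrange.basis_eq_prod_sub_inv_mul_nodal_div (Finset.mem_univ i),
    ← Lagrange.nodal_erase_eq_nodal_div (Finset.mem_univ i), ← mul_assoc, ← C_mul, ← hs,
    mul_right_comm, ← C_mul, ← hP']
  congr 2
  ring

lemma sum_divByMonic_eq_comp [Nonempty ι] (hΔ : Δ.comp P = derivative P * M) :
    ∑ i, M /ₘ (X - C (z i)) = (Δ /ₘ (X - C t)).comp P := by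
  classical
  refine mul_left_cancel₀ (sub_C_ne_zero_of_sub_C_eq_nodal hfac hl) ?_
  have hΔt (i : ι) : (derivative P).eval (z i) * M.eval (z i) = Δ.eval t := by
    rw [← eval_mul, ← hΔ, eval_comp, eval_eq_of_sub_C_eq_nodal hfac]
  have hfactor (i : ι) : (P - C t) * (M /ₘ (X - C (z i))) =
      C l * Lagrange.nodal (Finset.univ.erase i) z * M -
        C l * Lagrange.nodal (Finset.univ.erase i) z * C (M.eval (z i)) := by
    rw [hfac, Lagrange.nodal_eq_mul_nodal_erase (Finset.mem_univ i)]
    linear_combination C l * Lagrange.nodal (Finset.univ.erase i) z *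
      X_sub_C_mul_divByMonic_add_C_eval M (z i)
  calc (P - C t) * ∑ i, M /ₘ (X - C (z i))
      = derivative P * M - ∑ i, C (Δ.eval t) * Lagrange.basis Finset.univ z i := by
        simp_rw [Finset.mul_sum, hfactor, Finset.sum_sub_distrib, ← Finset.sum_mul,
          ← derivative_eq_sum_of_sub_C_eq_nodal hfac, mul_nodal_erase_eq_basis hfac hz (hΔt _)]
    _ = Δ.comp P - C (Δ.eval t) := by
        rw [← Finset.mul_sum, Lagrange.sum_basis hz.injOn Finset.univ_nonempty, mul_one, hΔ]
    _ = (P - C t) * (Δ /ₘ (X - C t)).comp P := by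
        conv_lhs => enter [1]; rw [← X_sub_C_mul_divByMonic_add_C_eval Δ t]
        simp

lemma regularPart_eq_zero (hg : g ∈ compOrthogonal P a b) (hgz : ∀ i, g.eval (z i) = 0)
    (hmoment : ∀ S : F[X], ∃ G : F[X], G.eval t ≠ 0 ∧
      formalIntegral a b (G.comp P * derivative P * S) = 0) :
    regularPart a b z g = 0 := by
  classical
  obtain ⟨S, rfl⟩ := sub_C_dvd_of_forall_eval_eq_zero hfac hl hz hgz
  have hquot (i : ι) : (P - C t) * S /ₘ (X - C (z i)) =
      C l * Lagrange.nodal (Finset.univ.erase i) z * S :=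
    divByMonic_X_sub_C_unique (c := 0) <| by
      rw [hfac, Lagrange.nodal_eq_mul_nodal_erase (Finset.mem_univ i), C_0]; ring
  have hreg : regularPart a b z ((P - C t) * S) = formalIntegral a b (derivative P * S) := by
    simp_rw [regularPart, hquot, ← map_sum, ← Finset.sum_mul,
      ← derivative_eq_sum_of_sub_C_eq_nodal hfac]
  obtain ⟨G, hGt, hG⟩ := hmoment S
  have hGsplit : G.comp P * derivative P * S =
      (G /ₘ (X - C t)).comp P * derivative P * ((P - C t) * S) +
        G.eval t • (derivative P * S) := by
    conv_lhs => rw [← X_sub_C_mul_divByMonic_add_C_eval G t]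
    simp only [add_comp, mul_comp, sub_comp, X_comp, C_comp, smul_eq_C_mul]
    ring
  rw [hGsplit, map_add, hg, zero_add, map_smul, smul_eq_mul] at hG
  exact hreg.trans ((mul_eq_zero.mp hG).resolve_left hGt)

open Differential

variable [CharZero F] [Differential F] [Nonempty ι] (hΔ : Δ.comp P = derivative P * M)
  (ha : a′ = 0) (hb : b′ = 0) (hMa : M.eval a = 0) (hMb : M.eval b = 0)
  (hza : ∀ i, z i ≠ a) (hzb : ∀ i, z i ≠ b) (hzM : ∀ i, (z i)′ = M.eval (z i))
include hΔ ha hb hMa hMb hza hzb hzM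

lemma regularPart_implicitDeriv (hg : g ∈ compOrthogonal P a b) :
    regularPart a b z (implicitDeriv M g) = (regularPart a b z g)′ +
      ∑ i, g.eval (z i) * ((z i)′ / (z i - b) - (z i)′ / (z i - a)) := by
  have horth : ∑ i, formalIntegral a b (derivative (M /ₘ (X - C (z i))) * g) = 0 := by
    rw [← map_sum, ← Finset.sum_mul, ← derivative_sum, sum_divByMonic_eq_comp hfac hl hz hΔ,
      derivative_comp, mul_comm (derivative P), hg]
  simp_rw [regularPart, fun i ↦ formalIntegral_implicitDeriv_divByMonic ha hb hMa hMb (hzM i)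
    (hza i) (hzb i) g, Finset.sum_sub_distrib, Finset.sum_add_distrib, horth, sub_zero, map_sum]

lemma sum_eval_mul_eq_zero_of_mem_compOrthogonal (hP : mapCoeffs P = 0)
    (hmoment : ∀ S : F[X], ∃ G : F[X], G.eval t ≠ 0 ∧
      formalIntegral a b (G.comp P * derivative P * S) = 0) {v : ι → F}
    (hv : ∀ (c : ι → F) (p : F), (∀ i, (c i)′ = 0) →
      p′ + ∑ i, c i * ((z i)′ / (z i - b) - (z i)′ / (z i - a)) = 0 → ∑ i, c i * v i = 0)
    (hg : g ∈ compOrthogonal P a b) : ∑ i, g.eval (z i) * v i = 0 := by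
  let nodeValues : F[X] →ₗ[F] ι → F := LinearMap.pi fun i ↦ leval (z i)
  have hderiv : ∀ y ∈ (compOrthogonal P a b).map nodeValues,
      (fun i ↦ (y i)′) ∈ (compOrthogonal P a b).map nodeValues := by
    rintro _ ⟨f, hf, rfl⟩
    exact ⟨implicitDeriv M f, implicitDeriv_mem_compOrthogonal ha hb hP hΔ hMa hMb hf,
      funext fun i ↦ eval_implicitDeriv (hzM i) f⟩
  have hconst : {c | c ∈ (compOrthogonal P a b).map nodeValues ∧ ∀ i, (c i)′ = 0} ⊆
      LinearMap.ker (Fintype.linearCombination F v) := by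
    rintro _ ⟨⟨f, hf, rfl⟩, hf'⟩
    refine hv _ (regularPart a b z f) hf' ?_
    change (regularPart a b z f)′ + ∑ i, f.eval (z i) * _ = 0
    rw [← regularPart_implicitDeriv hfac hl hz hΔ ha hb hMa hMb hza hzb hzM hf]
    exact regularPart_eq_zero hfac hl hz
      (implicitDeriv_mem_compOrthogonal ha hb hP hΔ hMa hMb hf)
      (fun i ↦ (eval_implicitDeriv (hzM i) f).trans (hf' i)) hmoment
  exact Submodule.span_le.mpr hconst
    (le_span_constants_of_deriv_mem hderiv (Submodule.mem_map_of_mem hg))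

end

end RegularPart

section TranscendentalDescent

lemma exists_ne_zero_dvd_comp {k : Type*} [Field k] {f : k[X]} (hf : f ≠ 0) (P : k[X]) :
    ∃ Δ : k[X], Δ ≠ 0 ∧ f ∣ Δ.comp P := by
  have : Module.Finite k (AdjoinRoot f) := (AdjoinRoot.powerBasis hf).finite
  obtain ⟨Δ, hΔ, hroot⟩ := Algebra.IsAlgebraic.isAlgebraic (R := k) (AdjoinRoot.mkₐ f P)
  rw [aeval_algHom_apply, ← comp_eq_aeval] at hroot
  exact ⟨Δ, hΔ, AdjoinRoot.mk_eq_zero.mp hroot⟩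

open Differential

lemma mapCoeffs_map_eq_zero {K F : Type*} [CommRing K] [CommRing F] [Differential F] {φ : K →+* F}
    (hφ : ∀ c, (φ c)′ = 0) (f : K[X]) : mapCoeffs (f.map φ) = 0 := by
  ext n : 1
  rw [coeff_mapCoeffs, coeff_map, hφ, coeff_zero]

lemma exists_comp_eq_derivative_mul_and_deriv_eq_eval {K F ι : Type*} [Field K] [Field F]
    [Algebra K F] [Differential F] (hK : ∀ c : K, (algebraMap K F c)′ = 0) {P : K[X]}
    (hP : derivative P ≠ 0) (a b : K) {z : ι → F} {t : F} (ht : Transcendental K t)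
    (hz : ∀ i, aeval (z i) P = t) :
    ∃ Δ M : F[X], Δ.comp (P.map (algebraMap K F)) = derivative (P.map (algebraMap K F)) * M ∧
      M.eval (algebraMap K F a) = 0 ∧ M.eval (algebraMap K F b) = 0 ∧
      ∀ i, (z i)′ = M.eval (z i) := by
  obtain ⟨Δ, hΔ0, M, hM⟩ := exists_ne_zero_dvd_comp
    (mul_ne_zero hP (mul_ne_zero (X_sub_C_ne_zero a) (X_sub_C_ne_zero b))) P
  replace hM : Δ.comp P = derivative P * ((X - C a) * (X - C b) * M) := by rw [hM]; ring
  have hΔt : aeval t Δ ≠ 0 := fun h ↦ hΔ0 (transcendental_iff.mp ht Δ h)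
  set u : F := t′ / aeval t Δ
  refine ⟨C u * Δ.map (algebraMap K F),
    C u * ((X - C a) * (X - C b) * M).map (algebraMap K F), ?_, by simp, by simp, fun i ↦ ?_⟩
  · rw [mul_comp, C_comp, ← Polynomial.map_comp, hM, Polynomial.map_mul, derivative_map]
    ring
  have hΔz : aeval t Δ = aeval (z i) (derivative P) * aeval (z i) ((X - C a) * (X - C b) * M) := by
    rw [← map_mul, ← hM, aeval_comp, hz]
  have htz : t′ = aeval (z i) (derivative P) * (z i)′ := by
    rw [← hz i, ← eval_map_algebraMap, ← coe_aeval_eq_eval, deriv_aeval_eq,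
      mapCoeffs_map_eq_zero hK, map_zero, zero_add, coe_aeval_eq_eval, derivative_map,
      eval_map_algebraMap]
  rw [eval_mul, eval_C, eval_map_algebraMap, div_mul_eq_mul_div, eq_div_iff hΔt, hΔz, htz]
  ring

lemma derivative_ne_zero_of_transcendental_aeval {K F : Type*} [Field K] [CharZero K] [Field F]
    [Algebra K F] {P : K[X]} {z : F} (h : Transcendental K (aeval z P)) : derivative P ≠ 0 := by
  intro hP
  rw [eq_C_of_derivative_eq_zero hP, aeval_C] at h
  exact h (isAlgebraic_algebraMap _)

lemma sum_aeval_mul_eq_zero_of_mem_compOrthogonal {K F ι : Type*} [Field K] [CharZero K] [Field F]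
    [Algebra K F] [Differential F] [Fintype ι] (hK : ∀ c : K, (algebraMap K F c)′ = 0)
    {P g : K[X]} {a b : K} {t l : F} {z : ι → F} (ht : Transcendental K t)
    (hfac : P.map (algebraMap K F) - C t = C l * Lagrange.nodal Finset.univ z) (hl : l ≠ 0)
    (hz : Function.Injective z) {v : ι → F}
    (hv : ∀ (c : ι → F) (p : F), (∀ i, (c i)′ = 0) → p′ + ∑ i, c i *
      ((z i)′ / (z i - algebraMap K F b) - (z i)′ / (z i - algebraMap K F a)) = 0 →
      ∑ i, c i * v i = 0)
    (hg : g ∈ compOrthogonal P a b) : ∑ i, aeval (z i) g * v i = 0 := by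
  obtain hι | hι := isEmpty_or_nonempty ι
  · simp
  have hzt (i : ι) : aeval (z i) P = t := by
    rw [← eval_map_algebraMap, eval_eq_of_sub_C_eq_nodal hfac]
  have hzc (c : K) (i : ι) : z i ≠ algebraMap K F c := by
    have := (transcendental_aeval_iff.mp (hzt i ▸ ht)).1
    exact fun h ↦ this (h ▸ isAlgebraic_algebraMap c)
  have : CharZero F := charZero_of_injective_algebraMap (algebraMap K F).injective
  obtain ⟨Δ, M, hΔ, hMa, hMb, hzM⟩ := exists_comp_eq_derivative_mul_and_deriv_eq_eval hK
    (derivative_ne_zero_of_transcendental_aeval (hzt hι.some ▸ ht)) a b ht hzt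
  simpa only [eval_map_algebraMap] using sum_eval_mul_eq_zero_of_mem_compOrthogonal hfac hl hz hΔ
    (hK a) (hK b) hMa hMb (hzc a) (hzc b) hzM (mapCoeffs_map_eq_zero hK P)
    (exists_eval_ne_zero_formalIntegral_comp_eq_zero P a b ht) hv
    (map_mem_compOrthogonal (algebraMap K F) hg)

end TranscendentalDescent

section Vandermonde

variable {F ι : Type*} [Field F] [Fintype ι]

lemma sum_eval_mul_eq_zero_of_degree_lt {y c : ι → F} {n : ℕ}
    (h : ∀ k < n, ∑ i, y i ^ k * c i = 0) {f : F[X]} (hf : f.degree < n) :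
    ∑ i, f.eval (y i) * c i = 0 := by
  obtain rfl | hf0 := eq_or_ne f 0
  · simp
  have hf' : f.natDegree < n := (natDegree_lt_iff_degree_lt hf0).mpr hf
  simp_rw [eval_eq_sum_range, Finset.sum_mul, mul_assoc]
  rw [Finset.sum_comm]
  refine Finset.sum_eq_zero fun k hk ↦ ?_
  rw [← Finset.mul_sum, h k (by grind), mul_zero]

lemma sum_fiber_eq_zero_of_sum_pow_mul_eq_zero [DecidableEq F] {y c : ι → F}
    {n : ℕ} (h : ∀ k < n, ∑ i, y i ^ k * c i = 0) {s : Finset ι} (hs : s.card ≤ n)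
    (hcs : ∀ i ∉ s, c i = 0) (i₀ : ι) : ∑ i with y i = y i₀, c i = 0 := by
  classical
  by_cases hi₀ : y i₀ ∈ s.image y
  · set f := Lagrange.basis (s.image y) id (y i₀)
    have hf : f.degree < n := by
      rw [Lagrange.degree_basis Function.injective_id.injOn hi₀, Nat.cast_lt]
      have := Finset.card_pos.mpr ⟨_, hi₀⟩
      have := s.card_image_le (f := y)
      omega
    rw [← sum_eval_mul_eq_zero_of_degree_lt h hf, Finset.sum_filter]
    refine Finset.sum_congr rfl fun i _ ↦ ?_
    split_ifs with hi
    · have hfi : f.eval (y i) = 1 := by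
        rw [hi]; exact Lagrange.eval_basis_self Function.injective_id.injOn hi₀
      rw [hfi, one_mul]
    · by_cases his : i ∈ s
      · have hfi : f.eval (y i) = 0 :=
          Lagrange.eval_basis_of_ne (v := id) (Ne.symm hi) (Finset.mem_image_of_mem y his)
        rw [hfi, zero_mul]
      · rw [hcs i his, mul_zero]
  · refine Finset.sum_eq_zero fun i hi ↦ hcs i fun his ↦ hi₀ ?_
    exact (Finset.mem_filter.mp hi).2 ▸ Finset.mem_image_of_mem y his

lemma exists_pos_of_sum_pow_mul_eq_zero [CharZero F] {y : ι → F} {c : ι → ℤ} {n : ℕ}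
    (h : ∀ k < n, ∑ i, y i ^ k * (c i : F) = 0) (hc : Finset.card {i | c i ≠ 0} ≤ n) {i₀ : ι}
    (hi₀ : c i₀ < 0) : ∃ i, y i = y i₀ ∧ 0 < c i := by
  classical
  have hsum : ∑ i with y i = y i₀, c i = 0 := by
    exact_mod_cast sum_fiber_eq_zero_of_sum_pow_mul_eq_zero h hc (by simp) i₀
  obtain ⟨i, hi, hpos⟩ := Finset.exists_pos_of_sum_zero_of_exists_nonzero _ hsum
    ⟨i₀, by simp, hi₀.ne⟩
  exact ⟨i, (Finset.mem_filter.mp hi).2, hpos⟩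

end Vandermonde

section Luroth

open IntermediateField

variable {k : Type*} [Field k]

lemma eq_div_comp_of_mul_comp_eq {P W r s : k[X]} (hW : 0 < W.natDegree) (hs : s ≠ 0)
    (h : P * s.comp W = r.comp W) : P = (r / s).comp W := by
  have hcomp : ∀ {f : k[X]}, f.comp W = 0 → f = 0 := fun hf ↦
    (comp_eq_zero_iff.mp hf).resolve_right fun ⟨_, hc⟩ ↦
      hW.ne' (by rw [hc, natDegree_C])
  have hmod : s.comp W * (P - (r / s).comp W) = (r % s).comp W := by
    rw [← EuclideanDomain.div_add_mod r s, add_comp, mul_comp] at h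
    linear_combination h
  have hrs : r % s = 0 := by
    by_contra hrs
    refine hrs (hcomp (eq_zero_of_dvd_of_natDegree_lt ⟨_, hmod.symm⟩ ?_))
    rw [natDegree_comp, natDegree_comp]
    exact Nat.mul_lt_mul_of_pos_right
      (natDegree_lt_natDegree hrs (EuclideanDomain.mod_lt r hs)) hW
  rw [hrs, zero_comp] at hmod
  exact sub_eq_zero.mp ((mul_eq_zero.mp hmod).resolve_left (mt hcomp hs))

lemma exists_eq_comp_of_mem_adjoin {P W : k[X]} (hW : 0 < W.natDegree)
    (h : algebraMap k[X] (RatFunc k) P ∈ k⟮algebraMap k[X] (RatFunc k) W⟯) :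
    ∃ G : k[X], P = G.comp W := by
  have haeval : ∀ f : k[X], aeval (algebraMap k[X] (RatFunc k) W) f =
      algebraMap k[X] (RatFunc k) (f.comp W) := fun f ↦ by
    rw [aeval_algebraMap_apply, comp_eq_aeval]
  obtain ⟨r, s, hrs⟩ := (mem_adjoin_simple_iff k _).mp h
  rw [haeval, haeval] at hrs
  by_cases hsW : s.comp W = 0
  · exact ⟨0, RatFunc.algebraMap_injective k (by simpa [hsW] using hrs)⟩
  · have hs : s ≠ 0 := by rintro rfl; simp at hsW
    rw [eq_div_iff (RatFunc.algebraMap_ne_zero hsW), ← map_mul] at hrs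
    exact ⟨r / s, eq_div_comp_of_mul_comp_eq hW hs (RatFunc.algebraMap_injective k hrs)⟩

variable {E : IntermediateField k (RatFunc k)} {P Q : k[X]}

lemma exists_algebraMap_eq_coeff_minpoly_X (hP : P.Monic) (hdeg : 0 < P.natDegree)
    (hPE : algebraMap k[X] (RatFunc k) P ∈ E) (n : ℕ) :
    ∃ W : k[X], algebraMap k[X] (RatFunc k) W =
      ((minpoly E (RatFunc.X : RatFunc k)).coeff n : E) := by
  let f : E[X] := P.map (algebraMap k E) - C ⟨_, hPE⟩
  let g : k[X][X] := P.map C - C P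
  have hg : g.Monic := (hP.map C).sub_of_left <| degree_C_le.trans_lt <| by
    rwa [← natDegree_pos_iff_degree_pos, hP.natDegree_map C]
  have hfg : f.map (algebraMap E (RatFunc k)) = g.map (algebraMap k[X] (RatFunc k)) := by
    simp only [f, g, Polynomial.map_sub, Polynomial.map_map, map_C]
    rfl
  have hfX : aeval (RatFunc.X : RatFunc k) f = 0 := by
    have hg0 : aeval (X : k[X]) g = 0 := by simp [g, aeval_def, eval₂_map]
    rw [← aeval_map_algebraMap (RatFunc k), hfg, aeval_map_algebraMap, ← RatFunc.algebraMap_X,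
      aeval_algebraMap_apply, hg0, map_zero]
  have hf : f.Monic := monic_of_injective (algebraMap E (RatFunc k)).injective (hfg ▸ hg.map _)
  have hdvd := hfg ▸ Polynomial.map_dvd (algebraMap E (RatFunc k)) (minpoly.dvd E _ hfX)
  have hint := isIntegral_coeff_of_dvd g _ hg ((minpoly.monic ⟨f, hf, hfX⟩).map _) hdvd n
  rw [coeff_map] at hint
  exact IsIntegrallyClosed.isIntegral_iff.mp hint

lemma exists_eq_adjoin_algebraMap (hdeg : 0 < P.natDegree)
    (hPE : algebraMap k[X] (RatFunc k) P ∈ E) :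
    ∃ W : k[X], 0 < W.natDegree ∧ E = k⟮algebraMap k[X] (RatFunc k) W⟯ := by
  have hP : P ≠ 0 := ne_zero_of_natDegree_gt hdeg
  have hbot : E ≠ ⊥ := by
    rintro rfl
    obtain ⟨c, hc⟩ := mem_bot.mp hPE
    rw [IsScalarTower.algebraMap_apply k k[X] (RatFunc k)] at hc
    simp [← RatFunc.algebraMap_injective k hc] at hdeg
  obtain ⟨n, hn⟩ : ∃ n, RatFunc.Luroth.generator E =
      ((minpoly E (RatFunc.X : RatFunc k)).coeff n : E) := by
    unfold RatFunc.Luroth.generator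
    rw [dif_neg hbot]
    exact ⟨_, rfl⟩
  have hmem : algebraMap k[X] (RatFunc k) (P * C P.leadingCoeff⁻¹) ∈ E := by
    rw [map_mul]
    exact E.mul_mem hPE (E.algebraMap_mem P.leadingCoeff⁻¹)
  obtain ⟨W, hW⟩ := exists_algebraMap_eq_coeff_minpoly_X (monic_mul_leadingCoeff_inv hP)
    (by rwa [natDegree_mul_leadingCoeff_inv _ hP]) hmem n
  rw [← hn] at hW
  refine ⟨W, Nat.pos_of_ne_zero fun h ↦ ?_, hW ▸ RatFunc.Luroth.eq_adjoin_generator⟩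
  obtain ⟨c, rfl⟩ := natDegree_eq_zero.mp h
  exact RatFunc.Luroth.generator_ne_C hbot ⟨c, by rw [← hW, RatFunc.algebraMap_C]⟩

lemma exists_eq_comp_of_mem_intermediateField (hdeg : 0 < P.natDegree)
    (hPE : algebraMap k[X] (RatFunc k) P ∈ E) (hQE : algebraMap k[X] (RatFunc k) Q ∈ E) :
    ∃ Pt Qt W : k[X], P = Pt.comp W ∧ Q = Qt.comp W ∧ algebraMap k[X] (RatFunc k) W ∈ E := by
  obtain ⟨W, hW, rfl⟩ := exists_eq_adjoin_algebraMap hdeg hPE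
  obtain ⟨Pt, hPt⟩ := exists_eq_comp_of_mem_adjoin hW hPE
  obtain ⟨Qt, hQt⟩ := exists_eq_comp_of_mem_adjoin hW hQE
  exact ⟨Pt, Qt, W, hPt, hQt, mem_adjoin_simple_self k _⟩

lemma exists_eq_comp_of_aeval_eq {R : Type*} [CommRing R] [IsDomain R] [Algebra k R] {z₁ z₂ : R}
    (hz₁ : Transcendental k z₁) (hz₂ : Transcendental k z₂) (hdeg : 0 < P.natDegree)
    (hP : aeval z₁ P = aeval z₂ P) (hQ : aeval z₁ Q = aeval z₂ Q) :
    ∃ Pt Qt W : k[X], P = Pt.comp W ∧ Q = Qt.comp W ∧ aeval z₁ W = aeval z₂ W := by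
  let ι := IsScalarTower.toAlgHom k R (FractionRing R)
  have hι : Function.Injective ι := IsFractionRing.injective R (FractionRing R)
  have hinj₁ : Function.Injective (ι.comp (aeval z₁)) :=
    hι.comp (transcendental_iff_injective.mp hz₁)
  have hinj₂ : Function.Injective (ι.comp (aeval z₂)) :=
    hι.comp (transcendental_iff_injective.mp hz₂)
  let φ₁ : RatFunc k →ₐ[k] FractionRing R := IsFractionRing.liftAlgHom hinj₁
  let φ₂ : RatFunc k →ₐ[k] FractionRing R := IsFractionRing.liftAlgHom hinj₂
  let E : IntermediateField k (RatFunc k) :=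
    { AlgHom.equalizer φ₁ φ₂ with
      inv_mem' := fun x (hx : φ₁ x = φ₂ x) ↦ show φ₁ x⁻¹ = φ₂ x⁻¹ by simp only [map_inv₀, hx] }
  have hE : ∀ f : k[X], algebraMap k[X] (RatFunc k) f ∈ E ↔ aeval z₁ f = aeval z₂ f := fun f ↦ by
    have hφ₁ : φ₁ (algebraMap _ _ f) = ι (aeval z₁ f) := IsFractionRing.lift_algebraMap hinj₁ f
    have hφ₂ : φ₂ (algebraMap _ _ f) = ι (aeval z₂ f) := IsFractionRing.lift_algebraMap hinj₂ f
    rw [← hι.eq_iff, ← hφ₁, ← hφ₂]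
    rfl
  obtain ⟨Pt, Qt, W, hPt, hQt, hW⟩ :=
    exists_eq_comp_of_mem_intermediateField hdeg ((hE P).mpr hP) ((hE Q).mpr hQ)
  exact ⟨Pt, Qt, W, hPt, hQt, (hE W).mp hW⟩

end Luroth

section EulerDerivation

open Differential LaurentSeries

/-- The differential ring structure whose derivation is a given additive map satisfying the
Leibniz rule. -/
abbrev differentialOfLeibniz {R : Type*} [CommRing R] (D : R →+ R)
    (hD : ∀ f g, D (f * g) = f * D g + g * D f) : Differential R where
  deriv := Derivation.mk' D.toIntLinearMap hD

variable {K : Type*} [Field K]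

/-- The Euler operator `X · d/dX` on Laurent series. It does not lower orders, so that residues of
differentials appear as constant coefficients. -/
noncomputable def eulerOperator : K⸨X⸩ →+ K⸨X⸩ where
  toFun f := ⟨fun n ↦ n * f.coeff n, f.isPWO_support.mono fun _ ↦ right_ne_zero_of_mul⟩
  map_zero' := by ext n; simp
  map_add' f g := by ext n; simp [mul_add]

lemma eulerOperator_mul (f g : K⸨X⸩) :
    eulerOperator (f * g) = f * eulerOperator g + g * eulerOperator f := by
  have hsupport (f : K⸨X⸩) : (eulerOperator f).support ⊆ f.support :=
    fun _ ↦ right_ne_zero_of_mul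
  ext n
  rw [HahnSeries.coeff_add, mul_comm g,
    HahnSeries.coeff_mul_right' g.isPWO_support (hsupport g),
    HahnSeries.coeff_mul_left' f.isPWO_support (hsupport f)]
  simp only [eulerOperator, AddMonoidHom.coe_mk, ZeroHom.coe_mk, HahnSeries.coeff_mul,
    Finset.mul_sum]
  rw [← Finset.sum_add_distrib]
  refine Finset.sum_congr rfl fun ij hij ↦ ?_
  rw [← (Finset.mem_antidiagonal.mp hij).2.2]
  push_cast
  ring

/-- Laurent series as a differential field under the Euler operator; a local instance rather than
a global one, as `d/dX` is an equally natural derivation. -/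
noncomputable abbrev eulerDifferential : Differential K⸨X⸩ :=
  differentialOfLeibniz eulerOperator eulerOperator_mul

attribute [local instance] eulerDifferential

lemma coeff_euler (f : K⸨X⸩) (n : ℤ) : (f′).coeff n = n * f.coeff n := rfl

lemma euler_C (c : K) : (HahnSeries.C c : K⸨X⸩)′ = 0 := by
  ext n
  rw [coeff_euler, HahnSeries.C_apply, HahnSeries.coeff_single]
  split_ifs with hn <;> simp [hn]

lemma eq_C_of_euler_eq_zero [CharZero K] {f : K⸨X⸩} (hf : f′ = 0) :
    f = HahnSeries.C (f.coeff 0) := by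
  ext n
  have hn := congr(HahnSeries.coeff $hf n)
  rw [coeff_euler, HahnSeries.coeff_zero, mul_eq_zero, Int.cast_eq_zero] at hn
  rw [HahnSeries.C_apply, HahnSeries.coeff_single]
  split_ifs with h
  · rw [h]
  · exact hn.resolve_left h

lemma coeff_zero_euler_div_self {f : K⸨X⸩} (hf : f ≠ 0) : (f′ / f).coeff 0 = f.order := by
  set h : K⸨X⸩ := f′ - HahnSeries.C (f.order : K) * f with hh
  have hcoeff (n : ℤ) : h.coeff n = (n - f.order) * f.coeff n := by
    rw [hh, HahnSeries.coeff_sub, coeff_euler, HahnSeries.C_mul_eq_smul, HahnSeries.coeff_smul,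
      smul_eq_mul, sub_mul]
  have hdiv : f′ / f = HahnSeries.C (f.order : K) + h / f := by
    rw [hh]; field_simp; ring
  suffices (h / f).coeff 0 = 0 by
    rw [hdiv, HahnSeries.coeff_add, this, add_zero, HahnSeries.C_apply,
      HahnSeries.coeff_single_same]
  by_cases h0 : h = 0
  · simp [h0]
  · have hne := HahnSeries.coeff_order_eq_zero.not.mpr h0
    rw [hcoeff] at hne
    have hle := HahnSeries.order_le_of_coeff_ne_zero (right_ne_zero_of_mul hne)
    have hlt : f.order < h.order := hle.lt_of_ne fun heq ↦ hne (by simp [heq])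
    have horder := HahnSeries.order_mul (div_ne_zero h0 hf) hf
    rw [div_mul_cancel₀ _ hf] at horder
    exact HahnSeries.coeff_eq_zero_of_lt_order (by omega)

lemma sum_mul_C_coeff_zero_eq_zero [CharZero K] {ι : Type*} [Fintype ι] {c w : ι → K⸨X⸩}
    {p : K⸨X⸩} (hc : ∀ i, (c i)′ = 0) (h : p′ + ∑ i, c i * w i = 0) :
    ∑ i, c i * HahnSeries.C ((w i).coeff 0) = 0 := by
  have hsum := congr(HahnSeries.coeff $h 0)
  rw [HahnSeries.coeff_add, coeff_euler, Int.cast_zero, zero_mul, zero_add,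
    HahnSeries.coeff_sum] at hsum
  calc ∑ i, c i * HahnSeries.C ((w i).coeff 0)
      = ∑ i, HahnSeries.C ((c i * w i).coeff 0) := Finset.sum_congr rfl fun i _ ↦ by
        rw [eq_C_of_euler_eq_zero (hc i), ← map_mul]
        simp
    _ = 0 := by rw [← map_sum, hsum, HahnSeries.coeff_zero, map_zero]

end EulerDerivation

section PuiseuxRoots

variable {K : Type*} [Field K]

lemma exists_powerSeries_root {f : (PowerSeries K)[X]} (hf : f.Monic) {β : K}
    (hroot : (f.map PowerSeries.constantCoeff).eval β = 0)
    (hsimple : (derivative (f.map PowerSeries.constantCoeff)).eval β ≠ 0) :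
    ∃ u : PowerSeries K, f.eval u = 0 ∧ PowerSeries.constantCoeff u = β := by
  have hens : HenselianRing (PowerSeries K) (Ideal.span {PowerSeries.X}) := inferInstance
  have hconst (g : (PowerSeries K)[X]) :
      PowerSeries.constantCoeff (g.eval (PowerSeries.C β)) =
        (g.map PowerSeries.constantCoeff).eval β := by
    rw [eval_map, ← eval₂_at_apply, PowerSeries.constantCoeff_C]
  obtain ⟨u, hu, huβ⟩ := hens.is_henselian f hf (PowerSeries.C β)
    (by rw [Ideal.mem_span_singleton, PowerSeries.X_dvd_iff, hconst, hroot])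
    (.map _ <| by
      rwa [PowerSeries.isUnit_iff_constantCoeff, hconst, ← derivative_map, isUnit_iff_ne_zero])
  rw [Ideal.mem_span_singleton, PowerSeries.X_dvd_iff, map_sub, PowerSeries.constantCoeff_C,
    sub_eq_zero] at huβ
  exact ⟨u, hu, huβ⟩

/- Hensel's lemma is available for monic polynomials only, hence the equation is solved for the
inverse `V` of the unknown. -/
lemma exists_units_pow_eq_eval_inv {f : (PowerSeries K)[X]} {d : ℕ} {β : K} (hd : (d : K) ≠ 0)
    (hβ : β ≠ 0) (hf : f.map PowerSeries.constantCoeff = C (β ^ d)) :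
    ∃ u : (PowerSeries K)ˣ, (u : PowerSeries K) ^ d = f.eval (↑u⁻¹) ∧
      PowerSeries.constantCoeff (u : PowerSeries K) = β := by
  set n := f.natDegree
  have hd' : d ≠ 0 := by rintro rfl; simp at hd
  have hmonic : (X ^ (n + d) - reflect n f).Monic := by
    refine monic_X_pow_sub (degree_le_natDegree.trans_lt ?_)
    have := natDegree_reflect_le (p := f) (N := n)
    exact_mod_cast this.trans_lt (by simp [n]; omega)
  have hmap : (X ^ (n + d) - reflect n f).map PowerSeries.constantCoeff =
      X ^ n * (X ^ d - C (β ^ d)) := by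
    rw [Polynomial.map_sub, Polynomial.map_pow, map_X, ← reflect_map, hf, reflect_C]
    ring
  obtain ⟨v, hv, hvβ⟩ := exists_powerSeries_root hmonic (β := β) (by simp [hmap]) (by
    simp only [hmap, derivative_mul, derivative_sub, derivative_C, derivative_X_pow]
    simp [hβ, hd])
  have hunit : IsUnit v := by
    rwa [PowerSeries.isUnit_iff_constantCoeff, hvβ, isUnit_iff_ne_zero]
  obtain ⟨u, rfl⟩ := hunit
  refine ⟨u, ?_, hvβ⟩
  rw [eval_sub, eval_pow, eval_X, sub_eq_zero] at hv
  let _ := u⁻¹.invertible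
  calc (u : PowerSeries K) ^ d = ↑u ^ (n + d) * ↑u⁻¹ ^ n := by
        rw [pow_add, mul_right_comm, ← mul_pow, Units.mul_inv, one_pow, one_mul]
    _ = (reflect n f).eval ↑u * ↑u⁻¹ ^ n := by rw [hv]
    _ = f.eval ↑u⁻¹ := by
        simpa [eval₂_eq_eval_map] using
          eval₂_reflect_mul_pow (RingHom.id _) (↑u⁻¹ : PowerSeries K) n f le_rfl

lemma eq_C_leadingCoeff_mul_prod_X_sub_C {R : Type*} [CommRing R] [IsDomain R] {f : R[X]}
    {Z : Finset R} (hf : f ≠ 0) (hcard : Z.card = f.natDegree) (hZ : ∀ z ∈ Z, f.IsRoot z) :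
    f = C f.leadingCoeff * ∏ z ∈ Z, (X - C z) := by
  have hle : Z.val ≤ f.roots :=
    (Multiset.le_iff_subset Z.nodup).mpr fun z hz ↦ (mem_roots hf).mpr (hZ z hz)
  have hroots : Z.val = f.roots :=
    Multiset.eq_of_le_of_card_le hle ((card_roots' f).trans hcard.ge)
  have hsplit : Multiset.card f.roots = f.natDegree := by rw [← hroots, ← hcard, Finset.card_val]
  rw [Finset.prod_eq_multiset_prod, hroots, C_leadingCoeff_mul_prod_multiset_X_sub_C hsplit]

lemma card_filter_constantCoeff_eq [DecidableEq K] {P : K[X]} {f : PowerSeries K}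
    {Z : Finset (PowerSeries K)} (hP : P ≠ 0) (hf : PowerSeries.constantCoeff f = 0)
    (hZ : P.map PowerSeries.C - C f = C (PowerSeries.C P.leadingCoeff) * ∏ z ∈ Z, (X - C z))
    (α : K) : Finset.card {z ∈ Z | PowerSeries.constantCoeff z = α} = P.rootMultiplicity α := by
  have hprod : P = C P.leadingCoeff *
      ((Z.val.map PowerSeries.constantCoeff).map fun β ↦ X - C β).prod := by
    have hmap := congr(Polynomial.map PowerSeries.constantCoeff $hZ)
    simp only [Polynomial.map_sub, Polynomial.map_mul, Polynomial.map_map, map_C,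
      PowerSeries.constantCoeff_comp_C, Polynomial.map_id, hf, map_zero, sub_zero,
      PowerSeries.constantCoeff_C, Polynomial.map_prod, map_X] at hmap
    rwa [Multiset.map_map]
  have hroots : P.roots = Z.val.map PowerSeries.constantCoeff := by
    rw [hprod, roots_C_mul _ (leadingCoeff_ne_zero.mpr hP), roots_multiset_prod_X_sub_C]
  rw [← count_roots, hroots, Multiset.count_map]
  simp only [eq_comm]
  rfl

variable [IsAlgClosed K]

lemma card_nthRootsFinset_of_natCast_ne_zero {d : ℕ} {γ : K} (hd : (d : K) ≠ 0) (hγ : γ ≠ 0) :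
    (nthRootsFinset d γ).card = d := by
  classical
  rw [nthRootsFinset, nthRoots, Multiset.toFinset_card_of_nodup
    (nodup_roots (separable_X_pow_sub_C γ hd hγ)),
    IsAlgClosed.card_roots_eq_natDegree, natDegree_X_pow_sub_C]

lemma exists_finset_units_pow_eq_eval_inv {f : (PowerSeries K)[X]} {d : ℕ} {γ : K}
    (hd : (d : K) ≠ 0) (hγ : γ ≠ 0) (hf : f.map PowerSeries.constantCoeff = C γ) :
    ∃ U : Finset (PowerSeries K)ˣ, U.card = d ∧
      ∀ u ∈ U, (u : PowerSeries K) ^ d = f.eval (↑u⁻¹) := by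
  classical
  have hd' : d ≠ 0 := by rintro rfl; simp at hd
  have hroot (β : nthRootsFinset d γ) : ∃ u : (PowerSeries K)ˣ,
      (u : PowerSeries K) ^ d = f.eval (↑u⁻¹) ∧
        PowerSeries.constantCoeff (u : PowerSeries K) = β := by
    have hβ : (β : K) ^ d = γ := (mem_nthRootsFinset (Nat.pos_of_ne_zero hd') _).mp β.2
    exact exists_units_pow_eq_eval_inv hd (fun h ↦ hγ (by rw [← hβ, h, zero_pow hd']))
      (by rw [hf, hβ])
  choose u hu huβ using hroot
  have hinj : Function.Injective u := fun β β' h ↦ Subtype.ext (by rw [← huβ β, h, huβ β'])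
  refine ⟨Finset.univ.image u, ?_, Finset.forall_mem_image.mpr fun β _ ↦ hu β⟩
  rw [Finset.card_image_of_injective _ hinj, Finset.card_univ, Fintype.card_coe,
    card_nthRootsFinset_of_natCast_ne_zero hd hγ]

variable [CharZero K] {P : K[X]}

/- With `P = (X - α) ^ d * q`, the substitution `z = α + X ^ m * u⁻¹` turns `P z = X ^ (d * m)`
into `u ^ d = q z`. -/
lemma exists_finset_eval_eq_X_pow (hP : P ≠ 0) (α : K) {m : ℕ} (hm : m ≠ 0) :
    ∃ Z : Finset (PowerSeries K), Z.card = P.rootMultiplicity α ∧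
      ∀ z ∈ Z, PowerSeries.constantCoeff z = α ∧
        (P.map PowerSeries.C).eval z = PowerSeries.X ^ (P.rootMultiplicity α * m) := by
  classical
  set d := P.rootMultiplicity α with hd_def
  obtain hd | hd := eq_or_ne d 0
  · exact ⟨∅, by simp [hd]⟩
  obtain ⟨q, hPq, hq⟩ := exists_eq_pow_rootMultiplicity_mul_and_not_dvd P hP α
  rw [dvd_iff_isRoot, IsRoot] at hq
  let l : (PowerSeries K)[X] := C (PowerSeries.X ^ m) * X + C (PowerSeries.C α)
  have hl : ((q.map PowerSeries.C).comp l).map PowerSeries.constantCoeff = C (q.eval α) := by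
    simp [l, Polynomial.map_comp, Polynomial.map_map, hm]
  obtain ⟨U, hU, hUq⟩ := exists_finset_units_pow_eq_eval_inv (Nat.cast_ne_zero.mpr hd) hq hl
  let z (u : (PowerSeries K)ˣ) : PowerSeries K := l.eval ↑u⁻¹
  have hz : Function.Injective z := fun u v huv ↦ by simpa [z, l, Units.ext_iff] using huv
  refine ⟨U.image z, by rw [Finset.card_image_of_injective _ hz, hU], ?_⟩
  simp only [Finset.forall_mem_image]
  refine fun u hu ↦ ⟨by simp [z, l, hm], ?_⟩
  have hqz : (q.map PowerSeries.C).eval (z u) = (u : PowerSeries K) ^ d := by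
    rw [hUq u hu, eval_comp]
  have hzα : z u - PowerSeries.C α = (PowerSeries.X : PowerSeries K) ^ m * ↑u⁻¹ := by simp [z, l]
  rw [hPq, Polynomial.map_mul, eval_mul, hqz, ← hd_def]
  simp only [Polynomial.map_pow, Polynomial.map_sub, map_X, map_C, eval_pow, eval_sub, eval_X,
    eval_C]
  rw [hzα, mul_pow, mul_assoc, ← mul_pow, Units.inv_mul, one_pow, mul_one, ← pow_mul, mul_comm]

lemma exists_finset_card_eq_natDegree {N : ℕ} (hP : P ≠ 0) (hN : N ≠ 0)
    (hdvd : ∀ α ∈ P.roots, P.rootMultiplicity α ∣ N) :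
    ∃ Z : Finset (PowerSeries K), Z.card = P.natDegree ∧
      ∀ z ∈ Z, (P.map PowerSeries.C).eval z = PowerSeries.X ^ N := by
  classical
  have hex (α : P.roots.toFinset) : ∃ Z : Finset (PowerSeries K),
      Z.card = P.rootMultiplicity (α : K) ∧ ∀ z ∈ Z, PowerSeries.constantCoeff z = (α : K) ∧
        (P.map PowerSeries.C).eval z = PowerSeries.X ^ N := by
    obtain ⟨m, rfl⟩ := hdvd α (Multiset.mem_toFinset.mp α.2)
    exact exists_finset_eval_eq_X_pow hP α (right_ne_zero_of_mul hN)
  choose Z hcard hZ using hex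
  refine ⟨Finset.univ.biUnion Z, ?_, fun z hz ↦ ?_⟩
  swap
  · obtain ⟨α, -, hα⟩ := Finset.mem_biUnion.mp hz
    exact (hZ α z hα).2
  have hdisj : ((Finset.univ : Finset P.roots.toFinset) : Set _).PairwiseDisjoint Z :=
    fun α _ β _ hαβ ↦ Finset.disjoint_left.mpr fun z hα hβ ↦
      hαβ (Subtype.ext ((hZ α z hα).1.symm.trans (hZ β z hβ).1))
  calc (Finset.univ.biUnion Z).card
      = ∑ α : P.roots.toFinset, P.roots.count (α : K) := by
        simp only [Finset.card_biUnion hdisj, hcard, count_roots]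
    _ = P.natDegree := by
        rw [Finset.sum_coe_sort P.roots.toFinset (P.roots.count ·), Multiset.toFinset_sum_count_eq,
          IsAlgClosed.card_roots_eq_natDegree]

lemma exists_finset_map_sub_C_X_pow_eq_prod {N : ℕ} (hdeg : 0 < P.natDegree) (hN : N ≠ 0)
    (hdvd : ∀ α ∈ P.roots, P.rootMultiplicity α ∣ N) :
    ∃ Z : Finset (PowerSeries K), P.map PowerSeries.C - C (PowerSeries.X ^ N) =
      C (PowerSeries.C P.leadingCoeff) * ∏ z ∈ Z, (X - C z) := by
  obtain ⟨Z, hcard, hZ⟩ := exists_finset_card_eq_natDegree (ne_zero_of_natDegree_gt hdeg) hN hdvd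
  have hlt : (C (PowerSeries.X ^ N : PowerSeries K)).degree < (P.map PowerSeries.C).degree := by
    refine degree_C_le.trans_lt ?_
    rwa [degree_map, ← natDegree_pos_iff_degree_pos]
  refine ⟨Z, ?_⟩
  have hne : P.map PowerSeries.C - C (PowerSeries.X ^ N : PowerSeries K) ≠ 0 :=
    sub_ne_zero.mpr fun h ↦ hlt.ne congr(degree $h).symm
  convert eq_C_leadingCoeff_mul_prod_X_sub_C hne (Z := Z) _ _ using 3
  · rw [leadingCoeff_sub_of_degree_lt hlt, leadingCoeff_map]
  · rw [hcard, natDegree_sub_C, natDegree_map]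
  · simpa [IsRoot, sub_eq_zero] using hZ

end PuiseuxRoots

section LogResidue

open Differential LaurentSeries

attribute [local instance] eulerDifferential

variable {K : Type*} [Field K]

lemma transcendental_powerSeries_X_pow {N : ℕ} (hN : N ≠ 0) :
    Transcendental K (PowerSeries.X ^ N : PowerSeries K) := by
  refine Transcendental.pow (transcendental_iff.mpr fun f hf ↦ ?_) (Nat.pos_of_ne_zero hN)
  have hcoe : aeval (PowerSeries.X : PowerSeries K) f = f := by
    simpa using aeval_algHom_apply (coeToPowerSeries.algHom (R := K) K) X f
  exact coe_injective K (hcoe.symm.trans (hf.trans coe_zero.symm))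

lemma order_ofPowerSeries_nonneg (f : PowerSeries K) :
    0 ≤ (HahnSeries.ofPowerSeries ℤ K f).order := by
  by_contra! h
  have hcoeff : (HahnSeries.ofPowerSeries ℤ K f).coeff _ = 0 :=
    (PowerSeries.coeff_coe f _).trans (if_pos h)
  rw [HahnSeries.coeff_order_eq_zero] at hcoeff
  simp [hcoeff] at h

lemma order_ofPowerSeries_pos_iff {f : PowerSeries K} (hf : f ≠ 0) :
    0 < (HahnSeries.ofPowerSeries ℤ K f).order ↔ PowerSeries.constantCoeff f = 0 := by
  have hcoeff : (HahnSeries.ofPowerSeries ℤ K f).coeff 0 = PowerSeries.constantCoeff f := by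
    simpa using PowerSeries.coeff_coe f 0
  rw [← hcoeff]
  refine ⟨HahnSeries.coeff_eq_zero_of_lt_order, fun h ↦ ?_⟩
  refine (order_ofPowerSeries_nonneg f).lt_of_ne fun h0 ↦ ?_
  rw [h0, HahnSeries.coeff_order_eq_zero] at h
  exact hf (HahnSeries.ofPowerSeries_injective (h.trans (map_zero _).symm))

/-- The residue at `0` of the logarithmic differential of `(z - b) / (z - a)`, that is, the
difference of the orders of `z - b` and `z - a` at `0`. -/
noncomputable def logResidue (a b : K) (z : PowerSeries K) : ℤ :=
  (HahnSeries.ofPowerSeries ℤ K (z - PowerSeries.C b)).order -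
    (HahnSeries.ofPowerSeries ℤ K (z - PowerSeries.C a)).order

variable {a b : K} {z : PowerSeries K}

lemma logResidue_pos_iff (hab : a ≠ b) (ha : z ≠ PowerSeries.C a) (hb : z ≠ PowerSeries.C b) :
    0 < logResidue a b z ↔ PowerSeries.constantCoeff z = b := by
  have hpos {c : K} (hc : z ≠ PowerSeries.C c) :
      0 < (HahnSeries.ofPowerSeries ℤ K (z - PowerSeries.C c)).order ↔
        PowerSeries.constantCoeff z = c := by
    rw [order_ofPowerSeries_pos_iff (sub_ne_zero.mpr hc), map_sub, PowerSeries.constantCoeff_C,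
      sub_eq_zero]
  have ha' := hpos ha
  have hb' := hpos hb
  have := order_ofPowerSeries_nonneg (z - PowerSeries.C a)
  have := order_ofPowerSeries_nonneg (z - PowerSeries.C b)
  unfold logResidue
  grind

lemma logResidue_neg_iff (hab : a ≠ b) (ha : z ≠ PowerSeries.C a) (hb : z ≠ PowerSeries.C b) :
    logResidue a b z < 0 ↔ PowerSeries.constantCoeff z = a := by
  rw [← logResidue_pos_iff hab.symm hb ha, logResidue, logResidue, sub_neg, sub_pos]

lemma algebraMap_eq_ofPowerSeries_C (c : K) :
    algebraMap K K⸨X⸩ c = HahnSeries.ofPowerSeries ℤ K (PowerSeries.C c) := by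
  rw [HahnSeries.algebraMap_apply', PowerSeries.algebraMap_eq]

lemma aeval_ofPowerSeries (z : PowerSeries K) (f : K[X]) :
    aeval (HahnSeries.ofPowerSeries ℤ K z) f = HahnSeries.ofPowerSeries ℤ K (aeval z f) := by
  have hC : algebraMap K K⸨X⸩ = (HahnSeries.ofPowerSeries ℤ K).comp (algebraMap K _) :=
    RingHom.ext algebraMap_eq_ofPowerSeries_C
  rw [aeval_def, aeval_def, hC, hom_eval₂]

lemma euler_algebraMap (c : K) : (algebraMap K K⸨X⸩ c)′ = 0 := by
  rw [algebraMap_eq_ofPowerSeries_C, HahnSeries.ofPowerSeries_C, euler_C]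

lemma coeff_zero_euler_div_sub_eq_logResidue (ha : z ≠ PowerSeries.C a)
    (hb : z ≠ PowerSeries.C b) :
    ((HahnSeries.ofPowerSeries ℤ K z)′ / (HahnSeries.ofPowerSeries ℤ K z - algebraMap K K⸨X⸩ b) -
      (HahnSeries.ofPowerSeries ℤ K z)′ /
        (HahnSeries.ofPowerSeries ℤ K z - algebraMap K K⸨X⸩ a)).coeff 0 = logResidue a b z := by
  have hdlog {c : K} (hc : z ≠ PowerSeries.C c) :
      ((HahnSeries.ofPowerSeries ℤ K z)′ /
        (HahnSeries.ofPowerSeries ℤ K z - algebraMap K K⸨X⸩ c)).coeff 0 =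
        (HahnSeries.ofPowerSeries ℤ K (z - PowerSeries.C c)).order := by
    have hne : HahnSeries.ofPowerSeries ℤ K (z - PowerSeries.C c) ≠ 0 :=
      (map_ne_zero_iff _ HahnSeries.ofPowerSeries_injective).mpr (sub_ne_zero.mpr hc)
    rw [← coeff_zero_euler_div_self hne, map_sub, ← algebraMap_eq_ofPowerSeries_C, map_sub,
      euler_algebraMap, sub_zero]
  rw [HahnSeries.coeff_sub, hdlog ha, hdlog hb, logResidue, Int.cast_sub]

lemma transcendental_ofPowerSeries_iff :
    Transcendental K (HahnSeries.ofPowerSeries ℤ K z) ↔ Transcendental K z := by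
  simp only [transcendental_iff, aeval_ofPowerSeries,
    map_eq_zero_iff _ (HahnSeries.ofPowerSeries_injective (Γ := ℤ) (R := K))]

lemma sum_aeval_mul_logResidue_eq_zero [CharZero K] {P g : K[X]} {N : ℕ}
    {Z : Finset (PowerSeries K)} (hP : P ≠ 0) (hN : N ≠ 0)
    (hZ : P.map PowerSeries.C - C (PowerSeries.X ^ N) =
      C (PowerSeries.C P.leadingCoeff) * ∏ z ∈ Z, (X - C z))
    (ha : ∀ z ∈ Z, z ≠ PowerSeries.C a) (hb : ∀ z ∈ Z, z ≠ PowerSeries.C b)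
    (hg : g ∈ compOrthogonal P a b) :
    ∑ z : Z, aeval (HahnSeries.ofPowerSeries ℤ K z) g * (logResidue a b z : K⸨X⸩) = 0 := by
  have hfac : P.map (algebraMap K K⸨X⸩) - C (HahnSeries.ofPowerSeries ℤ K (PowerSeries.X ^ N)) =
      C (algebraMap K K⸨X⸩ P.leadingCoeff) *
        Lagrange.nodal Finset.univ fun z : Z ↦ HahnSeries.ofPowerSeries ℤ K z := by
    have hmap := congr(Polynomial.map (HahnSeries.ofPowerSeries ℤ K) $hZ)
    have hC : (HahnSeries.ofPowerSeries ℤ K).comp PowerSeries.C = algebraMap K K⸨X⸩ :=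
      RingHom.ext fun c ↦ (algebraMap_eq_ofPowerSeries_C c).symm
    rw [Polynomial.map_sub, Polynomial.map_map, hC, map_C, Polynomial.map_mul, map_C,
      ← algebraMap_eq_ofPowerSeries_C, Polynomial.map_prod, ← Finset.prod_coe_sort] at hmap
    simpa only [Lagrange.nodal, Polynomial.map_sub, map_X, map_C] using hmap
  have hl : algebraMap K K⸨X⸩ P.leadingCoeff ≠ 0 :=
    (_root_.map_ne_zero _).mpr (leadingCoeff_ne_zero.mpr hP)
  have ht := transcendental_ofPowerSeries_iff.mpr (transcendental_powerSeries_X_pow (K := K) hN)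
  have hinj : Function.Injective fun z : Z ↦ HahnSeries.ofPowerSeries ℤ K z :=
    HahnSeries.ofPowerSeries_injective.comp Subtype.val_injective
  refine sum_aeval_mul_eq_zero_of_mem_compOrthogonal euler_algebraMap ht hfac hl hinj
    (fun c p hc h ↦ ?_) hg
  have hres := sum_mul_C_coeff_zero_eq_zero hc h
  simpa only [coeff_zero_euler_div_sub_eq_logResidue (ha _ (Subtype.prop _))
    (hb _ (Subtype.prop _)), map_intCast] using hres

end LogResidue

section Branches

open LaurentSeries

variable {K : Type*} [Field K] {P Q : K[X]} {a b : K}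

section

variable {f l : PowerSeries K} {Z : Finset (PowerSeries K)}
  (hZ : P.map PowerSeries.C - C f = C l * ∏ z ∈ Z, (X - C z))
include hZ

lemma aeval_eq_of_mem {z : PowerSeries K} (hz : z ∈ Z) : aeval z P = f := by
  have heval := congr(eval z $hZ)
  rwa [eval_sub, eval_mul, eval_prod, Finset.prod_eq_zero hz (by simp), mul_zero, eval_C,
    sub_eq_zero, ← PowerSeries.algebraMap_eq, eval_map_algebraMap] at heval

lemma ne_C_of_isRoot (hf : f ≠ 0) (ha : P.IsRoot a) : ∀ z ∈ Z, z ≠ PowerSeries.C a := by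
  rintro _ hz rfl
  have hPa := aeval_eq_of_mem hZ hz
  rw [← PowerSeries.algebraMap_eq, aeval_algebraMap_apply, coe_aeval_eq_eval, ha, map_zero] at hPa
  exact hf hPa.symm

end

lemma card_filter_logResidue_ne_zero_le [DecidableEq K] {Z : Finset (PowerSeries K)} (hab : a ≠ b)
    (ha : ∀ z ∈ Z, z ≠ PowerSeries.C a) (hb : ∀ z ∈ Z, z ≠ PowerSeries.C b) :
    Finset.card {z : Z | logResidue a b z ≠ 0} ≤
      Finset.card {z ∈ Z | PowerSeries.constantCoeff z = a} +
        Finset.card {z ∈ Z | PowerSeries.constantCoeff z = b} := by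
  classical
  rw [← Finset.card_map (Function.Embedding.subtype _)]
  refine (Finset.card_le_card fun x hx ↦ ?_).trans (Finset.card_union_le _ _)
  obtain ⟨z, hz, rfl⟩ := Finset.mem_map.mp hx
  have hres : logResidue a b z ≠ 0 := (Finset.mem_filter.mp hz).2
  rw [Finset.mem_union, Finset.mem_filter, Finset.mem_filter]
  exact hres.lt_or_gt.imp
    (fun hneg ↦ ⟨z.2, (logResidue_neg_iff hab (ha z z.2) (hb z z.2)).mp hneg⟩)
    (fun hpos ↦ ⟨z.2, (logResidue_pos_iff hab (ha z z.2) (hb z z.2)).mp hpos⟩)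

variable [CharZero K]

lemma exists_branches_aeval_eq {N : ℕ} {Z : Finset (PowerSeries K)} (hab : a ≠ b)
    (ha : P.IsRoot a) (hb : P.IsRoot b) (hP : P ≠ 0) (hN : N ≠ 0)
    (hZ : P.map PowerSeries.C - C (PowerSeries.X ^ N) =
      C (PowerSeries.C P.leadingCoeff) * ∏ z ∈ Z, (X - C z))
    (h : ∀ k < P.rootMultiplicity a + P.rootMultiplicity b, Q ^ k ∈ compOrthogonal P a b) :
    ∃ z₁ ∈ Z, ∃ z₂ ∈ Z, PowerSeries.constantCoeff z₁ = a ∧ PowerSeries.constantCoeff z₂ = b ∧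
      aeval z₁ Q = aeval z₂ Q := by
  classical
  have hXN : (PowerSeries.X : PowerSeries K) ^ N ≠ 0 := pow_ne_zero N PowerSeries.X_ne_zero
  have hZa := ne_C_of_isRoot hZ hXN ha
  have hZb := ne_C_of_isRoot hZ hXN hb
  have hcard := card_filter_constantCoeff_eq hP (by simp [hN]) hZ
  obtain ⟨z₁, hz₁⟩ : Finset.Nonempty {z ∈ Z | PowerSeries.constantCoeff z = a} := by
    rw [← Finset.card_pos, hcard]
    exact (rootMultiplicity_pos hP).mpr ha
  rw [Finset.mem_filter] at hz₁
  have hsupport : Finset.card {z : Z | logResidue a b z ≠ 0} ≤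
      P.rootMultiplicity a + P.rootMultiplicity b := by
    rw [← hcard a, ← hcard b]
    exact card_filter_logResidue_ne_zero_le hab hZa hZb
  have : CharZero K⸨X⸩ := charZero_of_injective_algebraMap (algebraMap K K⸨X⸩).injective
  obtain ⟨z₂, hQ, hz₂⟩ := exists_pos_of_sum_pow_mul_eq_zero
    (y := fun z : Z ↦ aeval (HahnSeries.ofPowerSeries ℤ K z) Q) (c := fun z : Z ↦ logResidue a b z)
    (fun k hk ↦ by
      simpa only [map_pow] using sum_aeval_mul_logResidue_eq_zero hP hN hZ hZa hZb (h k hk))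
    hsupport (i₀ := ⟨z₁, hz₁.1⟩) <|
      (logResidue_neg_iff hab (hZa z₁ hz₁.1) (hZb z₁ hz₁.1)).mpr hz₁.2
  simp only [aeval_ofPowerSeries] at hQ
  exact ⟨z₁, hz₁.1, z₂, z₂.2, hz₁.2, (logResidue_pos_iff hab (hZa z₂ z₂.2) (hZb z₂ z₂.2)).mp hz₂,
    (HahnSeries.ofPowerSeries_injective hQ).symm⟩

lemma exists_powerSeries_aeval_eq [IsAlgClosed K] (hab : a ≠ b) (ha : P.IsRoot a)
    (hb : P.IsRoot b) (hP : P ≠ 0)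
    (h : ∀ k < P.rootMultiplicity a + P.rootMultiplicity b, Q ^ k ∈ compOrthogonal P a b) :
    ∃ N ≠ 0, ∃ z₁ z₂ : PowerSeries K, PowerSeries.constantCoeff z₁ = a ∧
      PowerSeries.constantCoeff z₂ = b ∧ aeval z₁ P = PowerSeries.X ^ N ∧
      aeval z₂ P = PowerSeries.X ^ N ∧ aeval z₁ Q = aeval z₂ Q := by
  have hdvd : ∀ α ∈ P.roots, P.rootMultiplicity α ∣ P.natDegree.factorial := fun α hα ↦ by
    classical
    refine Nat.dvd_factorial ((rootMultiplicity_pos hP).mpr (isRoot_of_mem_roots hα)) ?_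
    exact count_roots P ▸ (Multiset.count_le_card α _).trans (card_roots' P)
  obtain ⟨Z, hZ⟩ := exists_finset_map_sub_C_X_pow_eq_prod
    (natDegree_pos_iff_degree_pos.mpr (degree_pos_of_root hP ha)) (Nat.factorial_ne_zero _) hdvd
  obtain ⟨z₁, hz₁, z₂, hz₂, hz₁a, hz₂b, hQ⟩ :=
    exists_branches_aeval_eq hab ha hb hP (Nat.factorial_ne_zero _) hZ h
  exact ⟨_, Nat.factorial_ne_zero _, z₁, z₂, hz₁a, hz₂b, aeval_eq_of_mem hZ hz₁,
    aeval_eq_of_mem hZ hz₂, hQ⟩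

end Branches

section Composition

lemma constantCoeff_aeval {R A : Type*} [CommSemiring R] [CommSemiring A] [Algebra R A]
    (z : PowerSeries A) (f : R[X]) :
    PowerSeries.constantCoeff (aeval z f) = aeval (PowerSeries.constantCoeff z) f := by
  have hC : PowerSeries.constantCoeff.comp (algebraMap R (PowerSeries A)) = algebraMap R A :=
    RingHom.ext fun c ↦ by simp [PowerSeries.algebraMap_apply]
  rw [aeval_def, aeval_def, hom_eval₂, hC]

variable {k : Type*} [Field k] [CharZero k]

lemma exists_eq_comp_of_pow_mem_compOrthogonal {P Q : k[X]} {a b : k} (hab : a ≠ b)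
    (ha : P.IsRoot a) (hb : P.IsRoot b) (hP : P ≠ 0)
    (h : ∀ n < P.rootMultiplicity a + P.rootMultiplicity b, Q ^ n ∈ compOrthogonal P a b) :
    ∃ Pt Qt W : k[X], P = Pt.comp W ∧ Q = Qt.comp W ∧ W.eval a = W.eval b := by
  let K := AlgebraicClosure k
  have hinj := (algebraMap k K).injective
  have hmap {c : k} : (P.map (algebraMap k K)).rootMultiplicity (algebraMap k K c) =
      P.rootMultiplicity c := (eq_rootMultiplicity_map hinj c).symm
  obtain ⟨N, hN, z₁, z₂, hz₁a, hz₂b, hz₁, hz₂, hQ⟩ := exists_powerSeries_aeval_eq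
    (hinj.ne hab) (ha.map (f := algebraMap k K)) (hb.map (f := algebraMap k K))
    ((Polynomial.map_ne_zero_iff hinj).mpr hP) (Q := Q.map (algebraMap k K)) (fun n hn ↦ by
      rw [← Polynomial.map_pow]
      exact map_mem_compOrthogonal _ (h n (by rwa [hmap, hmap] at hn)))
  rw [aeval_map_algebraMap] at hz₁ hz₂
  rw [aeval_map_algebraMap, aeval_map_algebraMap] at hQ
  have htrans {z : PowerSeries K} (hz : aeval z P = PowerSeries.X ^ N) : Transcendental k z := by
    have hX := (transcendental_powerSeries_X_pow (K := K) hN).restrictScalars hinj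
    exact (transcendental_aeval_iff.mp (hz ▸ hX)).1
  obtain ⟨Pt, Qt, W, hPW, hQW, hW⟩ := exists_eq_comp_of_aeval_eq (htrans hz₁) (htrans hz₂)
    (natDegree_pos_iff_degree_pos.mpr (degree_pos_of_root hP ha)) (hz₁.trans hz₂.symm) hQ
  refine ⟨Pt, Qt, W, hPW, hQW, hinj ?_⟩
  have hW0 := congr(PowerSeries.constantCoeff $hW)
  rwa [constantCoeff_aeval, constantCoeff_aeval, hz₁a, hz₂b, aeval_algebraMap_apply,
    aeval_algebraMap_apply, coe_aeval_eq_eval] at hW0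

lemma pow_mem_compOrthogonal {P Q : k[X]} {a b : k} {n : ℕ} (hPab : P.eval a = P.eval b)
    (h : ∀ i, ∀ j < n, formalIntegral a b (P ^ i * Q ^ j * derivative Q) = 0) :
    ∀ j ≤ n, Q ^ j ∈ compOrthogonal P a b := by
  intro j hj
  refine mem_compOrthogonal_of_forall_pow_derivative hPab fun i ↦ ?_
  obtain _ | j := j
  · simp
  · rw [derivative_pow_succ, mul_assoc, mul_left_comm, ← smul_eq_C_mul, map_smul, ← mul_assoc,
      h i j (by omega), smul_zero]

theorem polynomial_moment_problem_composition_general (P Q : k[X]) (a b : k)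
    (hPab : P.eval a = P.eval b)
    (hmom : ∀ i j : ℕ,
      j ≤ rootMultiplicity a (P - C (P.eval a)) + rootMultiplicity b (P - C (P.eval b)) - 2 →
      ∀ S : k[X], S.derivative = P ^ i * Q ^ j * Q.derivative → S.eval a = S.eval b) :
    ∃ Pt Qt W : k[X], P = Pt.comp W ∧ Q = Qt.comp W ∧ W.eval a = W.eval b := by
  obtain rfl | hab := eq_or_ne a b
  · exact ⟨P, Q, X, comp_X.symm, comp_X.symm, rfl⟩
  obtain hP | hP := eq_or_ne (P - C (P.eval a)) 0
  · exact ⟨C (P.eval a), X, Q, by rw [C_comp, ← sub_eq_zero, hP], X_comp.symm,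
      hmom 0 0 (Nat.zero_le _) Q (by simp)⟩
  have horth := pow_mem_compOrthogonal hPab fun i j hj ↦ by
    obtain ⟨S, hS⟩ := exists_derivative_eq (P ^ i * Q ^ j * derivative Q)
    rw [← hS, formalIntegral_derivative, hmom i j (Nat.le_of_lt_succ hj) S hS, sub_self]
  obtain ⟨Pt, Qt, W, hPW, hQW, hW⟩ := exists_eq_comp_of_pow_mem_compOrthogonal (Q := Q) hab
    (by simp) (by simp [hPab]) hP fun n hn ↦
      sub_C_mem_compOrthogonal (horth n (by rw [← hPab]; omega)) _
  exact ⟨Pt + C (P.eval a), Qt, W, by rw [add_comp, C_comp, ← hPW, sub_add_cancel], hQW, hW⟩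

end Composition

/-- **Theorem 2** of Pakovich, "On the polynomial moment problem":
if `P a = P b` for distinct `a, b` and all moments
`∫_a^b P^i Q^j Q' dz` vanish for `0 ≤ i` and `0 ≤ j ≤ d_a + d_b - 2`,
where `d_a`, `d_b` are the multiplicities of `a`, `b` with respect to `P`,
then `P = P̃ ∘ W`, `Q = Q̃ ∘ W` with `W a = W b`. -/
theorem polynomial_moment_problem_composition
    (P Q : ℂ[X]) (a b : ℂ) (hab : a ≠ b) (hPab : P.eval a = P.eval b)
    (hmom : ∀ i j : ℕ,
      j ≤ rootMultiplicity a (P - C (P.eval a)) + rootMultiplicity b (P - C (P.eval b)) - 2 →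
      ∀ S : ℂ[X], S.derivative = P ^ i * Q ^ j * Q.derivative → S.eval a = S.eval b) :
    ∃ Pt Qt W : ℂ[X], P = Pt.comp W ∧ Q = Qt.comp W ∧ W.eval a = W.eval b :=
  polynomial_moment_problem_composition_general P Q a b hPab hmom
end

section
/- Let P and Q be complex polynomials with P nonconstant, regarded as elements of ℂ(z) = RatFunc ℂ. Then the intermediate field ℂ(P,Q) generated by P and Q over ℂ is a proper subfield of ℂ(z) if and only if P and Q have a common right divisor of degree at least 2 in the composition algebra, i.e. if and only if there exist complex polynomials P̃, Q̃, W with deg W ≥ 2 such that P = P̃ ∘ W and Q = Q̃ ∘ W. -/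
open Polynomial IntermediateField

/-!
By Lüroth's theorem a subfield `E` of `K(X)` strictly containing `K` is `K(w)` for some `w`. As the
residue field at infinity is `K`, replacing `w` by `(w - c)⁻¹` if necessary we may assume that `w`
has a pole there. If `E` contains a nonconstant polynomial `P = A(w) / B(w)`, which also has a pole
at infinity, then `deg B < deg A`, so the equation `A(w) - P B(w) = 0` makes `w` integral over
`K[X]`, i.e. a polynomial `W`. It remains to observe that `[K(X) : K(W)] = deg W` and
`K[X] ∩ K(W) = K[W]`.
-/

section Valuation

variable {K F Γ : Type*} [Field K] [Field F] [Algebra K F] [LinearOrderedCommGroupWithZero Γ]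
  (v : Valuation F Γ) [v.IsTrivialOn K]

lemma natDegree_lt_natDegree_of_one_lt_valuation_aeval_div {w : F} (hw : 1 < v w) {A B : K[X]}
    (h : 1 < v (aeval w A / aeval w B)) : B.natDegree < A.natDegree := by
  obtain ⟨hAw, hBw⟩ : aeval w A ≠ 0 ∧ aeval w B ≠ 0 :=
    div_ne_zero_iff.mp (v.ne_zero_iff.mp (zero_lt_one.trans h).ne')
  have hA : A ≠ 0 := by rintro rfl; simp at hAw
  have hB : B ≠ 0 := by rintro rfl; simp at hBw
  rwa [map_div₀, one_lt_div₀ (zero_lt_iff.mpr (v.ne_zero_iff.mpr hBw)),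
    valuation_aeval_eq_valuation_X_pow_natDegree_of_one_lt_valuation_X w hw hA,
    valuation_aeval_eq_valuation_X_pow_natDegree_of_one_lt_valuation_X w hw hB,
    pow_lt_pow_iff_right₀ hw] at h

lemma isIntegral_of_mem_adjoin_simple_of_one_lt_valuation {R : Type*} [CommRing R] [Algebra K R]
    [Algebra R F] [IsScalarTower K R F] {w : F} (hw : 1 < v w) {x : R}
    (hx : 1 < v (algebraMap R F x)) (hxw : algebraMap R F x ∈ K⟮w⟯) : IsIntegral R w := by
  have : Nontrivial R := (algebraMap R F).domain_nontrivial
  obtain ⟨A, B, hAB⟩ := (mem_adjoin_simple_iff K _).mp hxw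
  have hdeg : B.natDegree < A.natDegree :=
    natDegree_lt_natDegree_of_one_lt_valuation_aeval_div v hw (hAB ▸ hx)
  have hA : A ≠ 0 := ne_zero_of_natDegree_gt hdeg
  have hBw : aeval w B ≠ 0 := by
    intro hBw
    simp [hAB, hBw, not_lt_zero] at hx
  let p : R[X] := A.map (algebraMap K R) - x • B.map (algebraMap K R)
  have hp_root : aeval w p = 0 := by
    simp [p, hAB, Algebra.smul_def, div_mul_cancel₀ _ hBw]
  have hp_lead : p.leadingCoeff = algebraMap K R A.leadingCoeff := by
    rw [leadingCoeff_sub_of_degree_lt, leadingCoeff_map]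
    calc (x • B.map (algebraMap K R)).degree ≤ (B.map (algebraMap K R)).degree := degree_smul_le _ _
      _ = B.degree := degree_map _ _
      _ < A.degree := degree_lt_degree hdeg
      _ = (A.map (algebraMap K R)).degree := (degree_map _ _).symm
  have hsmul : IsIntegral R (A.leadingCoeff • w) := by
    rw [← algebraMap_smul R, ← hp_lead]
    exact isIntegral_leadingCoeff_smul p w hp_root
  simpa [smul_smul, leadingCoeff_ne_zero.mpr hA] using hsmul.smul A.leadingCoeff⁻¹

end Valuation

lemma adjoin_simple_sub_algebraMap_inv {K F : Type*} [Field K] [Field F] [Algebra K F]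
    (w : F) (c : K) : K⟮(w - algebraMap K F c)⁻¹⟯ = K⟮w⟯ := by
  apply le_antisymm
  · rw [adjoin_simple_le_iff]
    exact inv_mem (sub_mem (mem_adjoin_simple_self K w) (IntermediateField.algebraMap_mem _ c))
  · rw [adjoin_simple_le_iff]
    have h := inv_mem (mem_adjoin_simple_self K (w - algebraMap K F c)⁻¹)
    rw [inv_inv] at h
    simpa using add_mem h (IntermediateField.algebraMap_mem _ c)

lemma aeval_algebraMap_eq_algebraMap_comp {R L : Type*} [CommSemiring R] [Semiring L]
    [Algebra R L] [Algebra R[X] L] [IsScalarTower R R[X] L] (W A : R[X]) :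
    aeval (algebraMap R[X] L W) A = algebraMap R[X] L (A.comp W) := by
  rw [aeval_algebraMap_apply, comp_eq_aeval]

section RatFunc

variable {K : Type*} [Field K]

lemma algebraMap_mem_bot_iff {P : K[X]} :
    algebraMap K[X] (RatFunc K) P ∈ (⊥ : IntermediateField K (RatFunc K)) ↔ P.natDegree = 0 := by
  rw [mem_bot, natDegree_eq_zero]
  exact exists_congr fun c ↦
    ⟨fun h ↦ RatFunc.algebraMap_injective K (by simpa using h), fun h ↦ by simp [← h]⟩

section InftyValuation

variable [DecidableEq (RatFunc K)]

lemma one_lt_inftyValuation_algebraMap_iff {P : K[X]} :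
    1 < RatFunc.inftyValuation K (algebraMap K[X] (RatFunc K) P) ↔ P.natDegree ≠ 0 := by
  rcases eq_or_ne P 0 with rfl | hP
  · simp
  · rw [RatFunc.inftyValuation_apply, RatFunc.inftyValuation.polynomial K hP]
    simp [← WithZero.exp_zero, Nat.pos_iff_ne_zero]

lemma inftyValuation_algebraMap_lt_of_degree_lt {P Q : K[X]} (h : P.degree < Q.degree) :
    RatFunc.inftyValuation K (algebraMap K[X] (RatFunc K) P) <
      RatFunc.inftyValuation K (algebraMap K[X] (RatFunc K) Q) := by
  have hQ : Q ≠ 0 := ne_zero_of_degree_gt h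
  rcases eq_or_ne P 0 with rfl | hP
  · simpa [zero_lt_iff] using hQ
  · simp only [RatFunc.inftyValuation_apply, RatFunc.inftyValuation.polynomial K hP,
      RatFunc.inftyValuation.polynomial K hQ, WithZero.exp_lt_exp, Nat.cast_lt]
    exact natDegree_lt_natDegree hP h

/- The constant is the quotient of the Euclidean division of `w.num` by `w.denom`. -/
lemma exists_inftyValuation_sub_algebraMap_lt_one {w : RatFunc K}
    (hw : RatFunc.inftyValuation K w ≤ 1) :
    ∃ c : K, RatFunc.inftyValuation K (w - algebraMap K (RatFunc K) c) < 1 := by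
  set φ := algebraMap K[X] (RatFunc K)
  have hdenom : φ w.denom ≠ 0 := RatFunc.algebraMap_ne_zero w.denom_ne_zero
  have hw_mul : w * φ w.denom = φ w.num :=
    (eq_div_iff hdenom).mp (RatFunc.num_div_denom w).symm
  have hrem : w - φ (w.num / w.denom) = φ (w.num % w.denom) / φ w.denom := by
    rw [eq_div_iff hdenom, EuclideanDomain.mod_eq_sub_mul_div, map_sub, map_mul, ← hw_mul]
    ring
  have hlt : RatFunc.inftyValuation K (w - φ (w.num / w.denom)) < 1 := by
    rw [hrem, map_div₀, div_lt_one₀ (zero_lt_iff.mpr (Valuation.ne_zero_iff _ |>.mpr hdenom))]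
    exact inftyValuation_algebraMap_lt_of_degree_lt (degree_mod_lt _ w.denom_ne_zero)
  have hquot : RatFunc.inftyValuation K (φ (w.num / w.denom)) ≤ 1 := by
    simpa using Valuation.map_sub_le _ hw hlt.le
  obtain ⟨c, hc⟩ := natDegree_eq_zero.mp
    (not_ne_iff.mp (one_lt_inftyValuation_algebraMap_iff.not.mp hquot.not_gt))
  exact ⟨c, by simpa [← hc, φ] using hlt⟩

lemma exists_adjoin_simple_eq_and_one_lt_inftyValuation {w : RatFunc K} (hw : K⟮w⟯ ≠ ⊥) :
    ∃ t : RatFunc K, K⟮t⟯ = K⟮w⟯ ∧ 1 < RatFunc.inftyValuation K t := by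
  rcases lt_or_ge 1 (RatFunc.inftyValuation K w) with hlt | hle
  · exact ⟨w, rfl, hlt⟩
  obtain ⟨c, hc⟩ := exists_inftyValuation_sub_algebraMap_lt_one hle
  have hwc : w - algebraMap K (RatFunc K) c ≠ 0 := by
    rw [sub_ne_zero]
    rintro rfl
    exact hw (adjoin_simple_eq_bot_iff.mpr (IntermediateField.algebraMap_mem ⊥ c))
  refine ⟨(w - algebraMap K (RatFunc K) c)⁻¹, adjoin_simple_sub_algebraMap_inv w c, ?_⟩
  rwa [map_inv₀, one_lt_inv₀ (zero_lt_iff.mpr (Valuation.ne_zero_iff _ |>.mpr hwc))]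

end InftyValuation

lemma exists_eq_adjoin_simple_algebraMap (E : IntermediateField K (RatFunc K)) {P : K[X]}
    (hP : P.natDegree ≠ 0) (hPE : algebraMap K[X] (RatFunc K) P ∈ E) :
    ∃ W : K[X], E = K⟮algebraMap K[X] (RatFunc K) W⟯ := by
  classical
  have hE : E ≠ ⊥ := by
    rintro rfl
    exact hP (algebraMap_mem_bot_iff.mp hPE)
  have hgen : E = K⟮RatFunc.Luroth.generator E⟯ := RatFunc.Luroth.eq_adjoin_generator
  obtain ⟨w, hw, hw_pole⟩ := exists_adjoin_simple_eq_and_one_lt_inftyValuation (hgen ▸ hE)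
  have hEw : E = K⟮w⟯ := hgen.trans hw.symm
  have hint : IsIntegral K[X] w := isIntegral_of_mem_adjoin_simple_of_one_lt_valuation
    (RatFunc.inftyValuation K) hw_pole (one_lt_inftyValuation_algebraMap_iff.mpr hP) (hEw ▸ hPE)
  obtain ⟨W, rfl⟩ := IsIntegrallyClosed.isIntegral_iff.mp hint
  exact ⟨W, hEw⟩

lemma dvd_of_comp_dvd_comp {A B W : K[X]} (hW : W.natDegree ≠ 0) (h : B.comp W ∣ A.comp W) :
    B ∣ A := by
  have comp_eq_zero {P : K[X]} (h : P.comp W = 0) : P = 0 := by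
    simpa [comp_eq_zero_iff, eq_C_coeff_zero_iff_natDegree_eq_zero, hW] using h
  rcases eq_or_ne B 0 with rfl | hB
  · exact (comp_eq_zero (by simpa using h)).symm ▸ dvd_rfl
  rw [← EuclideanDomain.mod_eq_zero]
  by_contra hrem
  have hrem_dvd : B.comp W ∣ (A % B).comp W := by
    rw [EuclideanDomain.mod_eq_sub_mul_div, sub_comp, mul_comp]
    exact dvd_sub h (dvd_mul_right _ _)
  have hle := natDegree_le_of_dvd hrem_dvd (mt comp_eq_zero hrem)
  rw [natDegree_comp, natDegree_comp] at hle
  exact (natDegree_lt_natDegree hrem (degree_mod_lt A hB)).not_ge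
    (Nat.le_of_mul_le_mul_right hle (Nat.pos_of_ne_zero hW))

lemma algebraMap_mem_adjoin_simple_algebraMap_iff {W P : K[X]} :
    algebraMap K[X] (RatFunc K) P ∈ K⟮algebraMap K[X] (RatFunc K) W⟯ ↔
      ∃ A : K[X], P = A.comp W := by
  constructor
  · intro hP
    rcases eq_or_ne W.natDegree 0 with hW | hW
    · rw [adjoin_simple_eq_bot_iff.mpr (algebraMap_mem_bot_iff.mpr hW), algebraMap_mem_bot_iff,
        natDegree_eq_zero] at hP
      obtain ⟨c, rfl⟩ := hP
      exact ⟨C c, C_comp.symm⟩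
    obtain ⟨A, B, hAB⟩ := (mem_adjoin_simple_iff K _).mp hP
    rw [aeval_algebraMap_eq_algebraMap_comp, aeval_algebraMap_eq_algebraMap_comp] at hAB
    rcases eq_or_ne (B.comp W) 0 with hBW | hBW
    · exact ⟨0, by simpa [hBW] using hAB⟩
    rw [eq_div_iff (RatFunc.algebraMap_ne_zero hBW), ← map_mul] at hAB
    replace hAB : P * B.comp W = A.comp W := RatFunc.algebraMap_injective K hAB
    obtain ⟨Q, rfl⟩ := dvd_of_comp_dvd_comp hW (Dvd.intro_left P hAB)
    exact ⟨Q, mul_right_cancel₀ hBW (by rw [hAB, mul_comp, mul_comm])⟩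
  · rintro ⟨A, rfl⟩
    rw [← aeval_algebraMap_eq_algebraMap_comp]
    exact (mem_adjoin_simple_iff K _).mpr ⟨A, 1, by simp⟩

lemma adjoin_image_algebraMap_le_iff {S : Set K[X]} {W : K[X]} :
    adjoin K (algebraMap K[X] (RatFunc K) '' S) ≤ K⟮algebraMap K[X] (RatFunc K) W⟯ ↔
      ∀ P ∈ S, ∃ A : K[X], P = A.comp W := by
  simp_rw [adjoin_le_iff, Set.image_subset_iff, ← algebraMap_mem_adjoin_simple_algebraMap_iff]
  rfl

lemma adjoin_simple_algebraMap_eq_top_iff {W : K[X]} :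
    K⟮algebraMap K[X] (RatFunc K) W⟯ = ⊤ ↔ W.natDegree = 1 := by
  rw [← finrank_eq_one_iff_eq_top, RatFunc.finrank_eq_max_natDegree]
  simp

theorem adjoin_pair_ne_top_iff_common_right_divisor_general (S : Set K[X]) :
    adjoin K (algebraMap K[X] (RatFunc K) '' S) ≠ ⊤ ↔
      ∃ W : K[X], 2 ≤ W.natDegree ∧ ∀ P ∈ S, ∃ A : K[X], P = A.comp W := by
  simp_rw [← adjoin_image_algebraMap_le_iff]
  constructor
  · intro hne
    by_cases hconst : ∀ P ∈ S, P.natDegree = 0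
    · refine ⟨X ^ 2, (natDegree_X_pow 2).ge, adjoin_le_iff.mpr ?_⟩
      rintro _ ⟨P, hP, rfl⟩
      exact (bot_le : (⊥ : IntermediateField K (RatFunc K)) ≤ _)
        (algebraMap_mem_bot_iff.mpr (hconst P hP))
    push Not at hconst
    obtain ⟨P, hPS, hP⟩ := hconst
    have hPE : algebraMap K[X] (RatFunc K) P ∈ adjoin K (algebraMap K[X] (RatFunc K) '' S) :=
      subset_adjoin K _ (Set.mem_image_of_mem _ hPS)
    obtain ⟨W, hW⟩ := exists_eq_adjoin_simple_algebraMap _ hP hPE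
    have hW1 : W.natDegree ≠ 1 := by
      rwa [Ne, ← adjoin_simple_algebraMap_eq_top_iff, ← hW]
    have hW0 : W.natDegree ≠ 0 := by
      obtain ⟨A, rfl⟩ := algebraMap_mem_adjoin_simple_algebraMap_iff.mp (hW ▸ hPE)
      exact right_ne_zero_of_mul (natDegree_comp (p := A) ▸ hP)
    exact ⟨W, by lia, hW.le⟩
  · rintro ⟨W, hW, hle⟩ htop
    have := adjoin_simple_algebraMap_eq_top_iff.mp (top_le_iff.mp (htop ▸ hle))
    lia

end RatFunc

/-- Corollary 1 / Ritt's criterion (field form): for complex polynomials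
`P, Q` with `P` nonconstant, `ℂ(P,Q)` is a proper subfield of `ℂ(z)` iff
`P` and `Q` have a common right divisor of degree at least 2 in the
composition algebra. -/
theorem adjoin_pair_ne_top_iff_common_right_divisor
    (P Q : ℂ[X]) (hP : 1 ≤ P.natDegree) :
    IntermediateField.adjoin ℂ
        ({algebraMap ℂ[X] (RatFunc ℂ) P, algebraMap ℂ[X] (RatFunc ℂ) Q} : Set (RatFunc ℂ)) ≠ ⊤ ↔
      ∃ Pt Qt W : ℂ[X], 2 ≤ W.natDegree ∧ P = Pt.comp W ∧ Q = Qt.comp W := by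
  rw [← Set.image_pair, adjoin_pair_ne_top_iff_common_right_divisor_general]
  simp only [Set.forall_mem_insert, Set.mem_singleton_iff, forall_eq]
  grind
end
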